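/- arXiv:2006.11420 — 6 statements merged into one kernel-verified Lean document; each statement's English description precedes it below -/
import Mathlib

section
/- Let f, g : ℝ → ℝ be nonconstant real polynomial functions, let φ : ℝ → ℝ be a bi-Lipschitz homeomorphism, and let c > 0 be a constant such that g ∘ φ = c·f. Then (i) deg f = deg g, and (ii) there exists a nonzero real number l such that φ(t)/t → l both as t → +∞ and as t → −∞ (in particular the two one-sided limits at infinity exist, are finite, nonzero, and equal). -/
open Filter Topology

/-!
A bi-Lipschitz `φ` satisfies `φ t ≍ t` at infinity, so `q ∘ φ ≍ q`, and `q ∘ φ = c p` forces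
`deg p = deg q =: n`. Comparing leading terms, `(φ t / t) ^ n` converges to a nonzero constant.
As `φ` is monotone or antitone and unbounded, `φ t / t` has the same sign near `+∞` and near `-∞`,
so one and the same `n`-th root is the limit of `φ t / t` at both ends.
-/

open Asymptotics Bornology Polynomial

section Lipschitz

variable {E F : Type*} [NormedAddCommGroup E] [NormedAddCommGroup F] {K : NNReal} {f : E → F}

theorem isBigO_id_cobounded_of_lipschitzWith (hf : LipschitzWith K f) :
    f =O[cobounded E] (id : E → E) := by
  have hsub : (fun x => f x - f 0) =O[cobounded E] (id : E → E) :=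
    .of_bound K <| .of_forall fun x => by simpa [dist_eq_norm] using hf.dist_le_mul x 0
  simpa using hsub.add (isLittleO_const_id_cobounded (f 0)).isBigO

theorem id_isBigO_cobounded_of_antilipschitzWith (hf : AntilipschitzWith K f) :
    (id : E → E) =O[cobounded E] f := by
  have hsub : (id : E → E) =O[cobounded E] fun x => f x - f 0 :=
    .of_bound K <| .of_forall fun x => by simpa [dist_eq_norm] using hf.le_mul_dist x 0
  have hconst : (fun _ => f 0) =o[cobounded E] f :=
    (isLittleO_const_id_cobounded (f 0)).comp_tendsto hf.tendsto_cobounded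
  exact hsub.trans ((isBigO_refl f _).sub hconst.isBigO)

end Lipschitz

theorem tendsto_cobounded_of_isTheta {α E F : Type*} [NormedAddCommGroup E]
    [NormedAddCommGroup F] {l : Filter α} {f : α → E} {g : α → F} (hfg : f =Θ[l] g)
    (hg : Tendsto g l (cobounded F)) : Tendsto f l (cobounded E) :=
  tendsto_norm_atTop_iff_cobounded.1 <|
    hfg.tendsto_norm_atTop_iff.2 (tendsto_norm_cobounded_atTop.comp hg)

section NormedField

variable {𝕜 : Type*} [NormedField 𝕜] {p q : 𝕜[X]} {φ : 𝕜 → 𝕜} {c : 𝕜}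

theorem isTheta_eval_comp {α : Type*} {l : Filter α} {f g : α → 𝕜} (p : 𝕜[X])
    (hfg : f =Θ[l] g) (hg : Tendsto g l (cobounded 𝕜)) :
    (fun x => p.eval (f x)) =Θ[l] fun x => p.eval (g x) := by
  have leading {h : α → 𝕜} (hh : Tendsto h l (cobounded 𝕜)) :
      (fun x => p.eval (h x)) =Θ[l] fun x => p.leadingCoeff * h x ^ p.natDegree :=
    ((isEquivalent_cobounded_leading_monomial (P := p)).comp_tendsto hh).isTheta
  exact (leading (tendsto_cobounded_of_isTheta hfg hg)).trans <|
    ((isTheta_refl (fun _ => p.leadingCoeff) l).mul (hfg.pow _)).trans (leading hg).symm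

theorem eventually_cobounded_eval_ne_zero (hp : p ≠ 0) : ∀ᶠ x in cobounded 𝕜, p.eval x ≠ 0 :=
  le_cofinite 𝕜 (eventually_cofinite_not_isRoot hp)

theorem tendsto_eval_div_pow_natDegree_cobounded (p : 𝕜[X]) :
    Tendsto (fun x => p.eval x / x ^ p.natDegree) (cobounded 𝕜) (𝓝 p.leadingCoeff) := by
  have hdiv : (fun x => p.eval x / x ^ p.natDegree) ~[cobounded 𝕜]
      fun x => p.leadingCoeff * x ^ p.natDegree / x ^ p.natDegree :=
    isEquivalent_cobounded_leading_monomial.div .refl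
  refine hdiv.tendsto_nhds_iff.2 <| tendsto_const_nhds.congr' ?_
  filter_upwards [eventually_ne_cobounded 0] with x hx
  rw [mul_div_cancel_right₀ _ (pow_ne_zero _ hx)]

theorem tendsto_div_pow_of_eval_comp_eq_const_mul (hq : q ≠ 0)
    (hφ : Tendsto φ (cobounded 𝕜) (cobounded 𝕜)) (hdeg : p.natDegree = q.natDegree)
    (heq : ∀ t, q.eval (φ t) = c * p.eval t) :
    Tendsto (fun t => (φ t / t) ^ q.natDegree) (cobounded 𝕜)
      (𝓝 (c * p.leadingCoeff / q.leadingCoeff)) := by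
  have hquot := ((tendsto_eval_div_pow_natDegree_cobounded p).const_mul c).div
    ((tendsto_eval_div_pow_natDegree_cobounded q).comp hφ) (leadingCoeff_ne_zero.2 hq)
  refine hquot.congr' ?_
  filter_upwards [hφ (eventually_cobounded_eval_ne_zero hq)] with t (ht : q.eval (φ t) ≠ 0)
  calc c * (p.eval t / t ^ p.natDegree) / (q.eval (φ t) / φ t ^ q.natDegree)
      = q.eval (φ t) / t ^ q.natDegree / (q.eval (φ t) / φ t ^ q.natDegree) := by
        rw [← mul_div_assoc, ← heq, hdeg]
    _ = (φ t / t) ^ q.natDegree := by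
        rw [div_div_div_comm, div_self ht, one_div_div, div_pow]

end NormedField

section NontriviallyNormedField

variable {𝕜 : Type*} [NontriviallyNormedField 𝕜] {p q : 𝕜[X]} {φ : 𝕜 → 𝕜} {c : 𝕜}

theorem degree_le_of_isBigO_cobounded (h : p.eval =O[cobounded 𝕜] q.eval) :
    p.degree ≤ q.degree := by
  by_contra! hlt
  have hp : p ≠ 0 := ne_zero_of_degree_gt hlt
  exact h.not_isLittleO (eventually_cobounded_eval_ne_zero hp).frequently
    (isLittleO_cobounded_of_degree_lt hlt)

theorem degree_eq_of_isTheta_cobounded (h : p.eval =Θ[cobounded 𝕜] q.eval) :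
    p.degree = q.degree :=
  (degree_le_of_isBigO_cobounded h.1).antisymm (degree_le_of_isBigO_cobounded h.2)

theorem degree_eq_of_eval_comp_eq_const_mul (hφ : φ =Θ[cobounded 𝕜] (id : 𝕜 → 𝕜)) (hc : c ≠ 0)
    (heq : ∀ t, q.eval (φ t) = c * p.eval t) : p.degree = q.degree := by
  have hcomp : (fun t => q.eval (φ t)) =Θ[cobounded 𝕜] q.eval :=
    isTheta_eval_comp q hφ tendsto_id
  simp only [heq, isTheta_const_mul_left hc] at hcomp
  exact degree_eq_of_isTheta_cobounded hcomp

end NontriviallyNormedField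

section Real

variable {φ : ℝ → ℝ} {n : ℕ} {L : ℝ}

theorem tendsto_rpow_inv_of_tendsto_pow {α : Type*} {l : Filter α} {u : α → ℝ} (hn : n ≠ 0)
    (hu : ∀ᶠ x in l, 0 ≤ u x) (h : Tendsto (fun x => u x ^ n) l (𝓝 L)) :
    Tendsto u l (𝓝 (L ^ (n : ℝ)⁻¹)) := by
  refine (h.rpow_const (.inr (by positivity))).congr' ?_
  filter_upwards [hu] with x hx using Real.pow_rpow_inv_natCast hx hn

theorem eventually_cobounded_div_self_nonneg_of_monotone (hmono : Monotone φ)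
    (hφ : Tendsto φ (cobounded ℝ) (cobounded ℝ)) : ∀ᶠ t in cobounded ℝ, 0 ≤ φ t / t := by
  have hlarge : ∀ᶠ t in cobounded ℝ, |φ 0| < |φ t| :=
    (tendsto_norm_cobounded_atTop.comp hφ).eventually_gt_atTop |φ 0|
  filter_upwards [hlarge] with t ht
  rcases le_total 0 t with h | h
  · have hle : φ 0 ≤ φ t := hmono h
    have hnonneg : 0 ≤ φ t := by
      by_contra! hneg
      exact ht.not_ge (abs_le_abs_of_nonpos hneg.le hle)
    exact div_nonneg hnonneg h
  · have hle : φ t ≤ φ 0 := hmono h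
    have hnonpos : φ t ≤ 0 := by
      by_contra! hpos
      exact ht.not_ge (abs_le_abs_of_nonneg hpos.le hle)
    exact div_nonneg_of_nonpos hnonpos h

theorem exists_tendsto_div_self_of_tendsto_pow (hmono : Monotone φ ∨ Antitone φ)
    (hφ : Tendsto φ (cobounded ℝ) (cobounded ℝ)) (hn : n ≠ 0)
    (h : Tendsto (fun t => (φ t / t) ^ n) (cobounded ℝ) (𝓝 L)) :
    ∃ l, l ^ n = L ∧ Tendsto (fun t => φ t / t) (cobounded ℝ) (𝓝 l) := by
  suffices ∃ l, Tendsto (fun t => φ t / t) (cobounded ℝ) (𝓝 l) from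
    this.imp fun l hl => ⟨tendsto_nhds_unique (hl.pow n) h, hl⟩
  rcases hmono with hmono | hanti
  · exact ⟨_, tendsto_rpow_inv_of_tendsto_pow hn
      (eventually_cobounded_div_self_nonneg_of_monotone hmono hφ) h⟩
  · have hnonneg : ∀ᶠ t in cobounded ℝ, 0 ≤ -(φ t / t) := by
      simpa only [Pi.neg_apply, neg_div] using
        eventually_cobounded_div_self_nonneg_of_monotone hanti.neg
          (tendsto_neg_cobounded.comp hφ)
    have hpow : Tendsto (fun t => (-(φ t / t)) ^ n) (cobounded ℝ) (𝓝 ((-1) ^ n * L)) :=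
      (h.const_mul ((-1) ^ n)).congr fun t => (neg_pow _ n).symm
    exact ⟨_, by simpa only [neg_neg] using (tendsto_rpow_inv_of_tendsto_pow hn hnonneg hpow).neg⟩

end Real

theorem stmt_0_general (p q : ℝ[X]) (hq : 1 ≤ q.natDegree) (φ : ℝ → ℝ)
    (hmono : Monotone φ ∨ Antitone φ) (hφ : φ =Θ[cobounded ℝ] (id : ℝ → ℝ)) (c : ℝ) (hc : c ≠ 0)
    (heq : ∀ t : ℝ, q.eval (φ t) = c * p.eval t) :
    p.natDegree = q.natDegree ∧
      ∃ l : ℝ, l ≠ 0 ∧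
        Tendsto (fun t => φ t / t) atTop (𝓝 l) ∧
        Tendsto (fun t => φ t / t) atBot (𝓝 l) := by
  have hdeg : p.natDegree = q.natDegree :=
    natDegree_eq_natDegree (degree_eq_of_eval_comp_eq_const_mul hφ hc heq)
  have hp0 : p ≠ 0 := ne_zero_of_natDegree_gt (hq.trans_eq hdeg.symm)
  have hq0 : q ≠ 0 := ne_zero_of_natDegree_gt hq
  have hn : q.natDegree ≠ 0 := Nat.one_le_iff_ne_zero.1 hq
  have htop := tendsto_cobounded_of_isTheta hφ tendsto_id
  obtain ⟨l, hl_pow, hl⟩ := exists_tendsto_div_self_of_tendsto_pow hmono htop hn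
    (tendsto_div_pow_of_eval_comp_eq_const_mul hq0 htop hdeg heq)
  have hl_pow_ne : l ^ q.natDegree ≠ 0 := by
    rw [hl_pow]
    exact div_ne_zero (mul_ne_zero hc (leadingCoeff_ne_zero.2 hp0)) (leadingCoeff_ne_zero.2 hq0)
  exact ⟨hdeg, l, (pow_ne_zero_iff hn).1 hl_pow_ne,
    hl.mono_left IsOrderBornology.atTop_le_cobounded,
    hl.mono_left IsOrderBornology.atBot_le_cobounded⟩

/-- If `f, g` are nonconstant real polynomial functions, `φ` is a bi-Lipschitz
homeomorphism of `ℝ` and `g ∘ φ = c·f` with `c > 0`, then `f` and `g` have the same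
degree, and `φ(t)/t` tends to a common finite nonzero limit as `t → +∞` and `t → −∞`. -/
theorem stmt_0 (p q : Polynomial ℝ) (hp : 1 ≤ p.natDegree) (hq : 1 ≤ q.natDegree)
    (φ : ℝ → ℝ) (hφbij : Function.Bijective φ)
    (hφlip : ∃ K : NNReal, LipschitzWith K φ)
    (hφinv : ∃ K : NNReal, LipschitzWith K (Function.invFun φ))
    (c : ℝ) (hc : 0 < c)
    (heq : ∀ t : ℝ, q.eval (φ t) = c * p.eval t) :
    p.natDegree = q.natDegree ∧
      ∃ l : ℝ, l ≠ 0 ∧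
        Tendsto (fun t => φ t / t) atTop (𝓝 l) ∧
        Tendsto (fun t => φ t / t) atBot (𝓝 l) := by
  obtain ⟨K, hK⟩ := hφlip
  obtain ⟨K', hK'⟩ := hφinv
  have hmono : Monotone φ ∨ Antitone φ :=
    (hK.continuous.strictMono_of_inj hφbij.injective).imp StrictMono.monotone StrictAnti.antitone
  have hanti : AntilipschitzWith K' φ :=
    hK'.to_rightInverse (Function.leftInverse_invFun hφbij.injective)
  exact stmt_0_general p q hq φ hmono ⟨isBigO_id_cobounded_of_lipschitzWith hK,
    id_isBigO_cobounded_of_antilipschitzWith hanti⟩ c hc.ne' heq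
end

section
/- Let f, g : ℝ → ℝ be real polynomial functions of the same degree d ≥ 1. If neither f nor g has a critical point (i.e., f′(t) ≠ 0 and g′(t) ≠ 0 for all t ∈ ℝ), then f and g are Lipschitz equivalent. -/
open Filter Topology

/-- Two functions `f, g : ℝ → ℝ` are Lipschitz equivalent if there is a bi-Lipschitz
homeomorphism `φ` of `ℝ` and a constant `c > 0` with `g ∘ φ = c·f`. -/
def LipschitzEquivFun (f g : ℝ → ℝ) : Prop :=
  ∃ φ : ℝ → ℝ, Function.Bijective φ ∧ (∃ K : NNReal, LipschitzWith K φ) ∧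
    (∃ K : NNReal, LipschitzWith K (Function.invFun φ)) ∧
    ∃ c : ℝ, 0 < c ∧ ∀ t : ℝ, g (φ t) = c * f t

/-!
With `m` the common degree, `p' ^ (2 * m)` and `(1 + p ^ 2) ^ (m - 1)` have the same degree, so
`|p'| ^ (2 * m)` is bounded by a multiple of `(1 + p ^ 2) ^ (m - 1)`; likewise
`(1 + q ^ 2) ^ (m - 1)` is bounded by a multiple of `|q'| ^ (2 * m)`, as `q'` has no zeros.
If `q ∘ φ = p`, the quantities `1 + p ^ 2` and `(1 + q ^ 2) ∘ φ` coincide, so `φ' = p' / (q' ∘ φ)`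
is bounded. Since `p` and `q`, being injective, open and closed maps, are homeomorphisms of `ℝ`,
this applies to `φ = q⁻¹ ∘ p` and, with the roles of `p` and `q` exchanged, to `φ⁻¹ = p⁻¹ ∘ q`.
-/

open Asymptotics Polynomial

theorem surjective_of_isOpenMap_of_isClosedMap {X Y : Type*} [TopologicalSpace X] [Nonempty X]
    [TopologicalSpace Y] [PreconnectedSpace Y] {f : X → Y} (hopen : IsOpenMap f)
    (hclosed : IsClosedMap f) : Function.Surjective f :=
  Set.range_eq_univ.1 <|
    IsClopen.eq_univ ⟨hclosed.isClosed_range, hopen.isOpen_range⟩ (Set.range_nonempty f)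

theorem isBigO_top_of_isBigO_cocompact {X E F : Type*} [TopologicalSpace X]
    [SeminormedAddCommGroup E] [NormedAddCommGroup F] {f : X → E} {g : X → F}
    (hf : Continuous f) (hg : Continuous g) (hg₀ : ∀ x, g x ≠ 0) (h : f =O[cocompact X] g) :
    f =O[⊤] g := by
  obtain ⟨C, hC⟩ := h.bound
  obtain ⟨K, hK, hKC⟩ := mem_cocompact.1 hC
  have off_compact : f =O[𝓟 Kᶜ] g := isBigO_principal.2 ⟨C, hKC⟩
  have on_compact : f =O[𝓟 K] g :=
    (hf.continuousOn.isBigO_principal hK (c := (1 : ℝ)) (by simp)).trans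
      (hg.continuousOn.isBigO_rev_principal hK (fun x _ ↦ hg₀ x) 1)
  simpa using on_compact.sup off_compact

theorem injective_of_hasDerivAt_ne_zero {f f' : ℝ → ℝ} (hf : ∀ x, HasDerivAt f (f' x) x)
    (hf' : ∀ x, f' x ≠ 0) : Function.Injective f := by
  refine .of_lt_imp_ne fun x y hxy heq ↦ ?_
  obtain ⟨c, -, hc⟩ := exists_hasDerivAt_eq_zero hxy
    (fun t _ ↦ (hf t).continuousAt.continuousWithinAt) heq (fun t _ ↦ hf t)
  exact hf' c hc

theorem isHomeomorph_eval_of_derivative_ne_zero {p : ℝ[X]}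
    (hp' : ∀ t, p.derivative.eval t ≠ 0) : IsHomeomorph p.eval := by
  have hopen : IsOpenMap p.eval := isOpenMap_of_hasStrictDerivAt p.hasStrictDerivAt hp'
  exact ⟨p.continuous, hopen, injective_of_hasDerivAt_ne_zero p.hasDerivAt hp',
    surjective_of_isOpenMap_of_isClosedMap hopen p.isClosedMap_eval⟩

theorem isBigO_top_eval_of_natDegree_le {R : Type*} [NormedRing R] [NormMulClass R]
    [ProperSpace R] {p q : R[X]} (hdeg : p.natDegree ≤ q.natDegree)
    (hq : ∀ t, q.eval t ≠ 0) : p.eval =O[⊤] q.eval := by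
  have hq₀ : q ≠ 0 := fun h ↦ hq 0 (by simp [h])
  have hdeg' : p.degree ≤ q.degree :=
    degree_le_natDegree.trans (by rw [degree_eq_natDegree hq₀]; exact_mod_cast hdeg)
  refine isBigO_top_of_isBigO_cocompact p.continuous q.continuous hq ?_
  rw [← Metric.cobounded_eq_cocompact]
  exact isBigO_cobounded_of_degree_le hdeg'

theorem natDegree_one_add_sq_pow {R : Type*} [Semiring R] [NoZeroDivisors R] (p : R[X]) (n : ℕ) :
    ((1 + p ^ 2) ^ n).natDegree = 2 * n * p.natDegree := by
  rw [natDegree_pow, ← C_1, natDegree_C_add, natDegree_pow]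
  ring

theorem isBigO_derivative_pow_one_add_sq_pow {p : ℝ[X]} {m : ℕ} (hm : p.natDegree ≤ m) :
    (p.derivative ^ (2 * m)).eval =O[⊤] ((1 + p ^ 2) ^ (m - 1)).eval := by
  refine isBigO_top_eval_of_natDegree_le ?_ fun t ↦ ?_
  · rw [natDegree_pow, natDegree_derivative, natDegree_one_add_sq_pow, mul_assoc, mul_assoc]
    gcongr 2 * ?_
    rw [Nat.mul_sub_one, Nat.sub_one_mul]
    lia
  · simp only [eval_pow, eval_add, eval_one]
    positivity

theorem isBigO_one_add_sq_pow_derivative_pow {q : ℝ[X]} (hq' : ∀ t, q.derivative.eval t ≠ 0) :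
    ((1 + q ^ 2) ^ (q.natDegree - 1)).eval =O[⊤] (q.derivative ^ (2 * q.natDegree)).eval := by
  refine isBigO_top_eval_of_natDegree_le (le_of_eq ?_) fun t ↦ ?_
  · rw [natDegree_one_add_sq_pow, natDegree_pow, natDegree_derivative]
    ring
  · rw [eval_pow]
    exact pow_ne_zero _ (hq' t)

section Reparametrization

variable {p q : ℝ[X]} {φ : ℝ → ℝ}

theorem isBigO_derivative_of_eval_comp_eq (hdeg : p.natDegree ≤ q.natDegree)
    (hq' : ∀ t, q.derivative.eval t ≠ 0) (hφ : q.eval ∘ φ = p.eval) :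
    p.derivative.eval =O[⊤] (q.derivative.eval ∘ φ) := by
  have exponent_ne_zero : 2 * q.natDegree ≠ 0 := fun h ↦
    hq' 0 (by rw [derivative_of_natDegree_zero (by lia), eval_zero])
  have value_eq (t : ℝ) : q.eval (φ t) = p.eval t := congrFun hφ t
  have comp_φ_eq : ((1 + q ^ 2) ^ (q.natDegree - 1)).eval ∘ φ =
      ((1 + p ^ 2) ^ (q.natDegree - 1)).eval := by
    ext t
    simp [value_eq]
  have lower : ((1 + p ^ 2) ^ (q.natDegree - 1)).eval =O[⊤]
      ((q.derivative ^ (2 * q.natDegree)).eval ∘ φ) :=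
    comp_φ_eq ▸ (isBigO_one_add_sq_pow_derivative_pow hq').comp_tendsto tendsto_top
  have pow_bound := (isBigO_derivative_pow_one_add_sq_pow hdeg).trans lower
  exact IsBigO.of_pow exponent_ne_zero (pow_bound.congr (by simp) (by simp))

theorem exists_lipschitzWith_of_eval_comp_eq (hcont : Continuous φ)
    (hdeg : p.natDegree ≤ q.natDegree) (hq' : ∀ t, q.derivative.eval t ≠ 0)
    (hφ : q.eval ∘ φ = p.eval) : ∃ K : NNReal, LipschitzWith K φ := by
  have hderiv (t : ℝ) : HasDerivAt φ (p.derivative.eval t / q.derivative.eval (φ t)) t :=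
    .of_comp_left hcont.continuousAt (q.hasDerivAt _) (p.hasDerivAt t) (hq' _) (.of_eq hφ)
  obtain ⟨C, hC⟩ := isBigO_top.1 (isBigO_derivative_of_eval_comp_eq hdeg hq' hφ)
  refine ⟨C.toNNReal, lipschitzWith_of_nnnorm_deriv_le
    (fun t ↦ (hderiv t).differentiableAt) fun t ↦ ?_⟩
  rw [(hderiv t).deriv, ← NNReal.coe_le_coe, coe_nnnorm, norm_div,
    div_le_iff₀ (norm_pos_iff.2 (hq' _))]
  exact (hC t).trans (by gcongr; exacts [C.le_coe_toNNReal, le_rfl])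

end Reparametrization

/-- Two polynomial functions of the same degree `d ≥ 1` without critical points are
Lipschitz equivalent. -/
theorem stmt_2 (p q : Polynomial ℝ) (d : ℕ) (hd : 1 ≤ d)
    (hp : p.natDegree = d) (hq : q.natDegree = d)
    (hp' : ∀ t : ℝ, p.derivative.eval t ≠ 0)
    (hq' : ∀ t : ℝ, q.derivative.eval t ≠ 0) :
    LipschitzEquivFun (fun t => p.eval t) (fun t => q.eval t) := by
  let P : ℝ ≃ₜ ℝ := (isHomeomorph_eval_of_derivative_ne_zero hp').homeomorph
  let Q : ℝ ≃ₜ ℝ := (isHomeomorph_eval_of_derivative_ne_zero hq').homeomorph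
  let φ : ℝ ≃ₜ ℝ := P.trans Q.symm
  have q_comp_φ : q.eval ∘ φ = p.eval := funext fun t ↦ Q.apply_symm_apply (P t)
  have p_comp_φ_symm : p.eval ∘ φ.symm = q.eval := funext fun t ↦ P.apply_symm_apply (Q t)
  have invFun_φ : Function.invFun φ = φ.symm :=
    Function.invFun_eq_of_injective_of_rightInverse φ.injective φ.apply_symm_apply
  refine ⟨φ, φ.bijective, ?_, ?_, 1, one_pos, fun t ↦ ?_⟩
  · exact exists_lipschitzWith_of_eval_comp_eq φ.continuous (hp.trans hq.symm).le hq' q_comp_φ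
  · rw [invFun_φ]
    exact exists_lipschitzWith_of_eval_comp_eq φ.symm.continuous (hq.trans hp.symm).le hp'
      p_comp_φ_symm
  · rw [one_mul]
    exact congrFun q_comp_φ t
end

section
/- Let f, g : ℝ → ℝ be real polynomial functions of the same odd degree d ≥ 1. Suppose f has exactly one critical point t₀, with multiplicity k, and g has exactly one critical point s₀, with the same multiplicity k. Suppose further that f(t₀) and g(s₀) have the same sign (both positive, both negative, or both zero). Then f and g are Lipschitz equivalent. -/
open Filter Topology

/-- The multiplicity of a function `f` at `t₀`: the least `k ≥ 1` such that the `k`-th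
derivative of `f` at `t₀` is nonzero. -/
noncomputable def multAt (f : ℝ → ℝ) (t₀ : ℝ) : ℕ :=
  sInf {k : ℕ | 1 ≤ k ∧ iteratedDeriv k f t₀ ≠ 0}

open Asymptotics Polynomial Set

/-!
Write `F = p - p(t₀)` and `G = q - q(s₀)`. Both polynomials are homeomorphisms of `ℝ`, so
`φ = q⁻¹ ∘ (c • p)` is the only candidate once `c > 0` is chosen with `c * p(t₀) = q(s₀)`, and then
`G ∘ φ = c • F`. All the estimates are global comparisons, i.e. `=O[⊤]` and `=Θ[⊤]`.

A polynomial without zeros is comparable to any other such polynomial of the same degree. Dividing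
out the only zero, `(t - t₀) * F'(t)` is comparable to `F(t)`, since the two have the same degree
and the same order of vanishing at `t₀`; for the same reason `F(t + t₀)` is comparable to
`G(t + s₀)`. The latter and `G(φ t) = c * F(t)` give `φ t - s₀ = O(t - t₀)`, and then
`φ'(t) = c * F'(t) / G'(φ t)` is comparable to
`(G(φ t) / (t - t₀)) * ((φ t - s₀) / G(φ t)) = (φ t - s₀) / (t - t₀)`, hence bounded for `t ≠ t₀`.
So `φ` is Lipschitz, and `φ⁻¹` is Lipschitz by symmetry.
-/

lemma lipschitzEquivFun_of_equiv {f g : ℝ → ℝ} (φ : ℝ ≃ ℝ) {K K' : NNReal}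
    (hφ : LipschitzWith K φ) (hφ' : LipschitzWith K' φ.symm) {c : ℝ} (hc : 0 < c)
    (h : ∀ t, g (φ t) = c * f t) : LipschitzEquivFun f g := by
  refine ⟨φ, φ.bijective, ⟨K, hφ⟩, ⟨K', ?_⟩, c, hc, h⟩
  rwa [Function.invFun_eq_of_injective_of_rightInverse φ.injective φ.apply_symm_apply]

lemma exists_pos_mul_eq_of_sign_eq {K : Type*} [Field K] [LinearOrder K] [IsStrictOrderedRing K]
    {x y : K} (h : SignType.sign x = SignType.sign y) : ∃ c, 0 < c ∧ c * x = y := by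
  rcases lt_trichotomy x 0 with hx | rfl | hx
  · have hy : y < 0 := sign_eq_neg_one_iff.1 (h ▸ sign_neg hx)
    exact ⟨y / x, div_pos_of_neg_of_neg hy hx, div_mul_cancel₀ y hx.ne⟩
  · exact ⟨1, one_pos, by simpa using (sign_eq_zero_iff.1 (h ▸ sign_zero)).symm⟩
  · have hy : 0 < y := sign_eq_one_iff.1 (h ▸ sign_pos hx)
    exact ⟨y / x, div_pos hy hx, div_mul_cancel₀ y hx.ne'⟩

lemma monotone_of_deriv_nonneg_of_ne {f f' : ℝ → ℝ} {a : ℝ} (hf : Continuous f)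
    (hf' : ∀ t ≠ a, HasDerivAt f (f' t) t) (hf'₀ : ∀ t ≠ a, 0 ≤ f' t) : Monotone f := by
  have mono_on {s : Set ℝ} (hs : Convex ℝ s) (ha : a ∉ interior s) : MonotoneOn f s :=
    monotoneOn_of_hasDerivWithinAt_nonneg hs hf.continuousOn
      (fun t ht ↦ (hf' t (ne_of_mem_of_not_mem ht ha)).hasDerivWithinAt)
      fun t ht ↦ hf'₀ t (ne_of_mem_of_not_mem ht ha)
  exact (mono_on (convex_Iic a) (by simp)).Iic_union_Ici (mono_on (convex_Ici a) (by simp))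

lemma lipschitzWith_of_abs_deriv_le_of_ne {f f' : ℝ → ℝ} {a K : ℝ} (hf : Continuous f)
    (hf' : ∀ t ≠ a, HasDerivAt f (f' t) t) (hK : ∀ t ≠ a, |f' t| ≤ K) :
    LipschitzWith K.toNNReal f := by
  have sub_mono : Monotone fun t ↦ K * t - f t :=
    monotone_of_deriv_nonneg_of_ne (by fun_prop)
      (fun t ht ↦ ((hasDerivAt_id t).const_mul K).sub (hf' t ht))
      fun t ht ↦ by linarith [le_of_abs_le (hK t ht)]
  have add_mono : Monotone fun t ↦ K * t + f t :=
    monotone_of_deriv_nonneg_of_ne (by fun_prop)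
      (fun t ht ↦ ((hasDerivAt_id t).const_mul K).add (hf' t ht))
      fun t ht ↦ by linarith [neg_le_of_abs_le (hK t ht)]
  refine LipschitzWith.of_le_add_mul' K fun x y ↦ ?_
  rw [Real.dist_eq]
  rcases le_total x y with h | h
  · rw [abs_of_nonpos (sub_nonpos.2 h)]
    linarith [add_mono h]
  · rw [abs_of_nonneg (sub_nonneg.2 h)]
    linarith [sub_mono h]

lemma strictMonoOn_or_strictAntiOn_of_deriv_ne_zero {f f' : ℝ → ℝ} {s : Set ℝ} (hs : Convex ℝ s)
    (hf : ContinuousOn f s) (hf' : ∀ t ∈ interior s, HasDerivAt f (f' t) t)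
    (hf'₀ : ∀ t ∈ interior s, f' t ≠ 0) : StrictMonoOn f s ∨ StrictAntiOn f s := by
  rcases hasDerivWithinAt_forall_lt_or_forall_gt_of_forall_ne hs.interior
    (fun t ht ↦ (hf' t ht).hasDerivWithinAt) hf'₀ with hneg | hpos
  · exact .inr <| strictAntiOn_of_hasDerivWithinAt_neg hs hf
      (fun t ht ↦ (hf' t ht).hasDerivWithinAt) hneg
  · exact .inl <| strictMonoOn_of_hasDerivWithinAt_pos hs hf
      (fun t ht ↦ (hf' t ht).hasDerivWithinAt) hpos

lemma strictMono_of_deriv_ne_zero_of_ne {f f' : ℝ → ℝ} {a : ℝ} (hf : ∀ t, HasDerivAt f (f' t) t)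
    (hf' : ∀ t, f' t = 0 → t = a) (hbot : Tendsto f atBot atBot) (htop : Tendsto f atTop atTop) :
    StrictMono f := by
  have mono_or_anti_on {s : Set ℝ} (hs : Convex ℝ s) (ha : a ∉ interior s) :
      StrictMonoOn f s ∨ StrictAntiOn f s :=
    strictMonoOn_or_strictAntiOn_of_deriv_ne_zero hs
      (fun t _ ↦ (hf t).continuousAt.continuousWithinAt) (fun t _ ↦ hf t)
      fun t ht h ↦ ha (hf' t h ▸ ht)
  have left_mono : StrictMonoOn f (Iic a) := by
    refine (mono_or_anti_on (convex_Iic a) (by simp)).resolve_right fun anti ↦ ?_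
    obtain ⟨t, hft, ht⟩ := ((hbot.eventually_lt_atBot (f a)).and (eventually_le_atBot a)).exists
    exact hft.not_ge (anti.antitoneOn ht self_mem_Iic ht)
  have right_mono : StrictMonoOn f (Ici a) := by
    refine (mono_or_anti_on (convex_Ici a) (by simp)).resolve_right fun anti ↦ ?_
    obtain ⟨t, hft, ht⟩ := ((htop.eventually_gt_atTop (f a)).and (eventually_ge_atTop a)).exists
    exact hft.not_ge (anti.antitoneOn self_mem_Ici ht ht)
  exact left_mono.Iic_union_Ici right_mono

lemma exists_lipschitzWith_of_comp_eq {f g f' g' φ : ℝ → ℝ} {a b : ℝ}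
    (hf : ∀ t, HasDerivAt f (f' t) t) (hg : ∀ y, HasDerivAt g (g' y) y)
    (hfa : ∀ t, f t = 0 → t = a) (hf' : (fun t ↦ (t - a) * f' t) =O[⊤] f)
    (hg' : g =O[⊤] fun y ↦ (y - b) * g' y) (hφ : Continuous φ) (hφf : g ∘ φ = f)
    (hφb : (fun t ↦ φ t - b) =O[⊤] fun t ↦ t - a) : ∃ K, LipschitzWith K φ := by
  have f_isBigO : f =O[⊤] fun t ↦ (φ t - b) * g' (φ t) := by
    rw [← hφf]
    exact hg'.comp_tendsto tendsto_top
  obtain ⟨C, hC⟩ := isBigO_top.1 f_isBigO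
  have deriv_ne_zero {t : ℝ} (ht : t ≠ a) : g' (φ t) ≠ 0 := fun h ↦
    ht <| hfa t <| by simpa [h] using hC t
  have num_isBigO : (fun t ↦ (t - a) * f' t) =O[⊤] fun t ↦ (t - a) * g' (φ t) :=
    hf'.trans <| f_isBigO.trans <| hφb.mul <| isBigO_refl _ _
  obtain ⟨K, hK⟩ := isBigO_top.1 num_isBigO
  refine ⟨K.toNNReal, lipschitzWith_of_abs_deriv_le_of_ne (f' := fun t ↦ f' t / g' (φ t)) hφ
    (a := a) (fun t ht ↦ ?_) fun t ht ↦ ?_⟩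
  · exact (hg (φ t)).of_comp_left hφ.continuousAt (hf t) (deriv_ne_zero ht) (.of_eq hφf)
  · have hKt := hK t
    rw [norm_mul, norm_mul, mul_left_comm] at hKt
    rw [abs_div, div_le_iff₀ (abs_pos.2 (deriv_ne_zero ht))]
    exact le_of_mul_le_mul_left hKt (norm_pos_iff.2 (sub_ne_zero.2 ht))

lemma isBigO_top_of_continuous_of_ne_zero {X E 𝕜 : Type*} [TopologicalSpace X]
    [NormedAddCommGroup E] [NormedField 𝕜] {f : X → E} {g : X → 𝕜} (hf : Continuous f)
    (hg : Continuous g) (hg₀ : ∀ x, g x ≠ 0) (h : f =O[cocompact X] g) : f =O[⊤] g := by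
  obtain ⟨c, hc⟩ := h.bound
  obtain ⟨s, hs, hsc⟩ := mem_cocompact.1 hc
  have on_s : f =O[𝓟 s] g :=
    (hf.continuousOn.isBigO_principal hs (c := (1 : ℝ)) (by simp)).trans
      (hg.continuousOn.isBigO_rev_principal hs (fun x _ ↦ hg₀ x) _)
  have on_compl : f =O[𝓟 sᶜ] g := isBigO_principal.2 ⟨c, hsc⟩
  simpa using on_s.sup on_compl

lemma ne_zero_of_eval_eq_zero_iff_eq {R : Type*} [Ring R] [Nontrivial R] {F : R[X]} {a : R}
    (hF : ∀ t, F.eval t = 0 ↔ t = a) : F ≠ 0 := by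
  rintro rfl
  simpa using hF (a + 1)

lemma exists_eq_X_sub_C_pow_rootMultiplicity_mul {R : Type*} [CommRing R] [IsDomain R] {F : R[X]}
    {a : R} (hF₀ : F ≠ 0) (hF : ∀ t, F.eval t = 0 → t = a) :
    ∃ u : R[X], F = (X - C a) ^ F.rootMultiplicity a * u ∧ (∀ t, u.eval t ≠ 0) ∧
      F.natDegree = F.rootMultiplicity a + u.natDegree := by
  obtain ⟨u, hFu, hu⟩ := exists_eq_pow_rootMultiplicity_mul_and_not_dvd F hF₀ a
  refine ⟨u, hFu, fun t ht ↦ ?_, ?_⟩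
  · obtain rfl : t = a := hF t (by rw [hFu, eval_mul, ht, mul_zero])
    exact hu (dvd_iff_isRoot.2 ht)
  · have hu₀ : u ≠ 0 := fun h ↦ hu (h ▸ dvd_zero _)
    conv_lhs => rw [hFu]
    rw [natDegree_mul (pow_ne_zero _ (X_sub_C_ne_zero a)) hu₀, natDegree_pow, natDegree_X_sub_C,
      mul_one]

section ProperField

variable {𝕜 : Type*} [NormedField 𝕜] [ProperSpace 𝕜]

lemma isTheta_top_eval_of_natDegree_eq {u v : 𝕜[X]} (hu : ∀ t, u.eval t ≠ 0)
    (hv : ∀ t, v.eval t ≠ 0) (h : u.natDegree = v.natDegree) : u.eval =Θ[⊤] v.eval := by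
  have hdeg : u.degree = v.degree := by
    rw [degree_eq_natDegree fun h ↦ hu 0 (by simp [h]),
      degree_eq_natDegree fun h ↦ hv 0 (by simp [h]), h]
  have isBigO {u v : 𝕜[X]} (hv : ∀ t, v.eval t ≠ 0) (hdeg : u.degree ≤ v.degree) :
      u.eval =O[⊤] v.eval :=
    isBigO_top_of_continuous_of_ne_zero u.continuous v.continuous hv
      (Metric.cobounded_eq_cocompact (α := 𝕜) ▸ isBigO_cobounded_of_degree_le hdeg)
  exact ⟨isBigO hv hdeg.le, isBigO hu hdeg.ge⟩

lemma isTheta_top_eval_of_rootMultiplicity_eq {F G : 𝕜[X]} {a b : 𝕜} (hF₀ : F ≠ 0)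
    (hG₀ : G ≠ 0) (hF : ∀ t, F.eval t = 0 → t = a) (hG : ∀ t, G.eval t = 0 → t = b)
    (hdeg : F.natDegree = G.natDegree) (hmult : F.rootMultiplicity a = G.rootMultiplicity b) :
    F.eval =Θ[⊤] fun t ↦ G.eval (t + (b - a)) := by
  obtain ⟨u, hFu, hu, hu_deg⟩ := exists_eq_X_sub_C_pow_rootMultiplicity_mul hF₀ hF
  obtain ⟨v, hGv, hv, hv_deg⟩ := exists_eq_X_sub_C_pow_rootMultiplicity_mul hG₀ hG
  have cofactors : u.eval =Θ[⊤] (taylor (b - a) v).eval :=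
    isTheta_top_eval_of_natDegree_eq hu (fun t ↦ taylor_eval (b - a) v t ▸ hv _)
      (by simp only [natDegree_taylor]; omega)
  have F_eval : F.eval = fun t ↦ (t - a) ^ G.rootMultiplicity b * u.eval t := by
    ext t
    conv_lhs => rw [hFu, hmult]
    simp
  have G_eval (t : 𝕜) : G.eval (t + (b - a)) =
      (t - a) ^ G.rootMultiplicity b * (taylor (b - a) v).eval t := by
    have sub_eq : t + (b - a) - b = t - a := by ring
    conv_lhs => rw [hGv]
    simp [taylor_eval, sub_eq]
  simp only [F_eval, G_eval]
  exact (isTheta_refl _ _).mul cofactors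

lemma isTheta_top_sub_mul_eval_derivative [CharZero 𝕜] {F : 𝕜[X]} {a : 𝕜}
    (hF : ∀ t, F.eval t = 0 ↔ t = a) (hF' : ∀ t, F.derivative.eval t = 0 → t = a) :
    (fun t ↦ (t - a) * F.derivative.eval t) =Θ[⊤] F.eval := by
  have ha : F.IsRoot a := (hF a).2 rfl
  have hF₀ : F ≠ 0 := ne_zero_of_eval_eq_zero_iff_eq hF
  have hF_deg : 0 < F.natDegree :=
    natDegree_pos_iff_degree_pos.2 (degree_pos_of_root hF₀ ha)
  have hF'₀ : F.derivative ≠ 0 := fun h ↦ hF_deg.ne' (derivative_eq_zero.1 h)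
  have hprod₀ : (X - C a) * F.derivative ≠ 0 := mul_ne_zero (X_sub_C_ne_zero a) hF'₀
  have hprod (t : 𝕜) (ht : ((X - C a) * F.derivative).eval t = 0) : t = a := by
    rw [eval_mul, mul_eq_zero] at ht
    exact ht.elim (fun h ↦ by simpa [sub_eq_zero] using h) (hF' t)
  have hdeg : ((X - C a) * F.derivative).natDegree = F.natDegree := by
    rw [natDegree_mul (X_sub_C_ne_zero a) hF'₀, natDegree_X_sub_C, natDegree_derivative]
    omega
  have hmult : ((X - C a) * F.derivative).rootMultiplicity a = F.rootMultiplicity a := by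
    have := (rootMultiplicity_pos hF₀).2 ha
    rw [rootMultiplicity_mul hprod₀, rootMultiplicity_X_sub_C_self,
      derivative_rootMultiplicity_of_root ha]
    omega
  simpa using isTheta_top_eval_of_rootMultiplicity_eq hprod₀ hF₀ hprod (fun t ↦ (hF t).1) hdeg hmult

end ProperField

lemma exists_abs_eval_le_of_abs_sub_le {u : ℝ[X]} (hu : ∀ t, u.eval t ≠ 0) (a : ℝ) :
    ∃ C, ∀ x y, |x - a| ≤ |y - a| → |u.eval x| ≤ C * |u.eval y| := by
  -- `w` increases with `|t - a|`; it is compared with `u ^ 2` so that the degrees agree.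
  set w : ℝ[X] := (1 + (X - C a) ^ 2) ^ u.natDegree with hw
  have w_eval (t : ℝ) : w.eval t = (1 + (t - a) ^ 2) ^ u.natDegree := by simp [hw]
  have w_pos (t : ℝ) : 0 < w.eval t := by rw [w_eval]; positivity
  have w_mono {x y : ℝ} (h : |x - a| ≤ |y - a|) : w.eval x ≤ w.eval y := by
    have := sq_le_sq.2 h
    rw [w_eval, w_eval]
    gcongr
  have w_natDegree : (u ^ 2).natDegree = w.natDegree := by
    have : (1 + (X - C a) ^ 2 : ℝ[X]).natDegree = 2 := by
      rw [add_comm, ← C_1, natDegree_add_C, natDegree_pow, natDegree_X_sub_C]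
    rw [hw, natDegree_pow, natDegree_pow, this, mul_comm]
  obtain ⟨hle, hge⟩ := isTheta_top_eval_of_natDegree_eq (u := u ^ 2) (v := w)
    (by simpa using hu) (fun t ↦ (w_pos t).ne') w_natDegree
  obtain ⟨A, hA₀, hA⟩ := hle.exists_nonneg
  obtain ⟨B, hB⟩ := isBigO_top.1 hge
  have sq_le (x y : ℝ) (h : |x - a| ≤ |y - a|) : u.eval x ^ 2 ≤ A * B * u.eval y ^ 2 := by
    calc u.eval x ^ 2 ≤ A * w.eval x := by
          simpa [abs_of_pos (w_pos x)] using isBigOWith_top.1 hA x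
      _ ≤ A * w.eval y := by gcongr; exact w_mono h
      _ ≤ A * (B * u.eval y ^ 2) := by
          gcongr
          simpa [abs_of_pos (w_pos y)] using hB y
      _ = A * B * u.eval y ^ 2 := by ring
  refine ⟨√(A * B), fun x y h ↦ ?_⟩
  rw [← Real.sqrt_sq_eq_abs (u.eval y), ← Real.sqrt_mul' _ (sq_nonneg _)]
  exact Real.abs_le_sqrt (sq_le x y h)

lemma isBigO_sub_of_isBigO_eval {ι : Type*} {l : Filter ι} {F : ℝ[X]} {a : ℝ} {α β : ι → ℝ}
    (hF : ∀ t, F.eval t = 0 ↔ t = a)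
    (h : (fun i ↦ F.eval (α i)) =O[l] fun i ↦ F.eval (β i)) :
    (fun i ↦ α i - a) =O[l] fun i ↦ β i - a := by
  have hF₀ : F ≠ 0 := ne_zero_of_eval_eq_zero_iff_eq hF
  have hk : F.rootMultiplicity a ≠ 0 := ((rootMultiplicity_pos hF₀).2 ((hF a).2 rfl)).ne'
  obtain ⟨u, hFu, hu, -⟩ := exists_eq_X_sub_C_pow_rootMultiplicity_mul hF₀ fun t ↦ (hF t).1
  set k := F.rootMultiplicity a
  obtain ⟨C, hC⟩ := exists_abs_eval_le_of_abs_sub_le hu a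
  obtain ⟨M, hM₀, hM⟩ := h.exists_nonneg
  have F_eval (t : ℝ) : |F.eval t| = |t - a| ^ k * |u.eval t| := by
    simp [hFu, abs_mul]
  refine IsBigO.of_pow hk <| .of_bound (max 1 (M * C)) ?_
  filter_upwards [hM.bound] with i hi
  simp only [Pi.pow_apply, norm_pow, Real.norm_eq_abs, F_eval] at hi ⊢
  rcases le_total |α i - a| |β i - a| with near | far
  · calc |α i - a| ^ k ≤ 1 * |β i - a| ^ k := by rw [one_mul]; gcongr
      _ ≤ max 1 (M * C) * |β i - a| ^ k := by gcongr; exact le_max_left _ _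
  · have : |α i - a| ^ k * |u.eval (α i)| ≤ M * C * |β i - a| ^ k * |u.eval (α i)| :=
      calc |α i - a| ^ k * |u.eval (α i)| ≤ M * (|β i - a| ^ k * |u.eval (β i)|) := hi
        _ ≤ M * (|β i - a| ^ k * (C * |u.eval (α i)|)) := by gcongr; exact hC _ _ far
        _ = M * C * |β i - a| ^ k * |u.eval (α i)| := by ring
    calc |α i - a| ^ k ≤ M * C * |β i - a| ^ k :=
          le_of_mul_le_mul_right this (abs_pos.2 (hu _))
      _ ≤ max 1 (M * C) * |β i - a| ^ k := by gcongr; exact le_max_right _ _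

lemma exists_lipschitzWith_of_eval_comp_eq_s3 {F G : ℝ[X]} {a b c : ℝ} {φ : ℝ → ℝ}
    (hF : ∀ t, F.eval t = 0 ↔ t = a) (hF' : ∀ t, F.derivative.eval t = 0 → t = a)
    (hG : ∀ t, G.eval t = 0 ↔ t = b) (hG' : ∀ t, G.derivative.eval t = 0 → t = b)
    (hdeg : F.natDegree = G.natDegree) (hmult : F.rootMultiplicity a = G.rootMultiplicity b)
    (hφ : Continuous φ) (hc : c ≠ 0) (h : ∀ t, G.eval (φ t) = c * F.eval t) :
    ∃ K, LipschitzWith K φ := by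
  have F_isTheta : F.eval =Θ[⊤] fun t ↦ G.eval (t + (b - a)) :=
    isTheta_top_eval_of_rootMultiplicity_eq (ne_zero_of_eval_eq_zero_iff_eq hF)
      (ne_zero_of_eval_eq_zero_iff_eq hG) (fun t ↦ (hF t).1) (fun t ↦ (hG t).1) hdeg hmult
  have φ_sub_isBigO : (fun t ↦ φ t - b) =O[⊤] fun t ↦ t - a := by
    have shifted : (fun t ↦ φ t - b) =O[⊤] fun t ↦ t + (b - a) - b :=
      isBigO_sub_of_isBigO_eval hG (by simpa only [h] using F_isTheta.1.const_mul_left c)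
    exact shifted.congr_right fun t ↦ by ring
  refine exists_lipschitzWith_of_comp_eq (a := a) (b := b) (fun t ↦ (F.hasDerivAt t).const_mul c)
    G.hasDerivAt (fun t ht ↦ (hF t).1 (by simpa [hc] using ht)) ?_
    (isTheta_top_sub_mul_eval_derivative hG hG').2 hφ (funext h) φ_sub_isBigO
  simpa only [mul_left_comm, isBigO_const_mul_left_iff hc] using
    (isTheta_top_sub_mul_eval_derivative hF hF').1.const_mul_right hc

lemma iteratedDeriv_eval {𝕜 : Type*} [NontriviallyNormedField 𝕜] (p : 𝕜[X]) (n : ℕ) :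
    iteratedDeriv n (fun t ↦ p.eval t) = fun t ↦ (derivative^[n] p).eval t := by
  induction n with
  | zero => simp
  | succ n ih =>
    rw [iteratedDeriv_succ, ih, Function.iterate_succ_apply']
    exact funext fun t ↦ Polynomial.deriv _

lemma multAt_eval_eq_rootMultiplicity {p : ℝ[X]} (hp : p.natDegree ≠ 0) (t₀ : ℝ) :
    multAt (fun t ↦ p.eval t) t₀ = (p - C (p.eval t₀)).rootMultiplicity t₀ := by
  set P := p - C (p.eval t₀) with hP
  have hP₀ : P ≠ 0 := fun h ↦ hp <| by rw [sub_eq_zero.1 h, natDegree_C]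
  have root : P.IsRoot t₀ := by simp [hP]
  have iteratedDeriv_eq {n : ℕ} (hn : 1 ≤ n) :
      iteratedDeriv n (fun t ↦ p.eval t) t₀ = (derivative^[n] P).eval t₀ := by
    obtain ⟨m, rfl⟩ := Nat.exists_eq_add_of_le' hn
    simp [iteratedDeriv_eval, hP]
  refine IsLeast.csInf_eq ⟨⟨(rootMultiplicity_pos hP₀).2 root, ?_⟩, fun n ⟨hn, hne⟩ ↦ ?_⟩
  · rw [iteratedDeriv_eq ((rootMultiplicity_pos hP₀).2 root)]
    intro h
    refine lt_irrefl (P.rootMultiplicity t₀) <|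
      (lt_rootMultiplicity_iff_isRoot_iterate_derivative hP₀).2 fun m hm ↦ ?_
    rcases hm.lt_or_eq with hlt | rfl
    · exact isRoot_iterate_derivative_of_lt_rootMultiplicity hlt
    · exact h
  · by_contra! hlt
    rw [iteratedDeriv_eq hn] at hne
    exact hne (isRoot_iterate_derivative_of_lt_rootMultiplicity hlt)

lemma tendsto_eval_atBot_atBot_of_odd_natDegree {p : ℝ[X]} (hodd : Odd p.natDegree)
    (hlead : 0 < p.leadingCoeff) : Tendsto (fun t ↦ p.eval t) atBot atBot := by
  have natDegree_comp_neg : (p.comp (-X)).natDegree = p.natDegree := by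
    rw [natDegree_comp, natDegree_neg, natDegree_X, mul_one]
  have leadingCoeff_comp_neg : (p.comp (-X)).leadingCoeff = -p.leadingCoeff := by
    rw [leadingCoeff_comp (by simp), leadingCoeff_neg, leadingCoeff_X, hodd.neg_one_pow,
      mul_neg_one]
  have comp_tendsto : Tendsto (fun t ↦ (p.comp (-X)).eval t) atTop atBot :=
    tendsto_atBot_of_leadingCoeff_nonpos _
      (natDegree_pos_iff_degree_pos.1 (natDegree_comp_neg ▸ hodd.pos))
      (leadingCoeff_comp_neg ▸ (neg_neg_of_pos hlead).le)
  simpa [Function.comp_def] using comp_tendsto.comp tendsto_neg_atBot_atTop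

lemma exists_homeomorph_eval_eq {p : ℝ[X]} {a : ℝ} (hodd : Odd p.natDegree)
    (hp' : ∀ t, p.derivative.eval t = 0 → t = a) : ∃ e : ℝ ≃ₜ ℝ, ∀ t, e t = p.eval t := by
  wlog hlead : 0 < p.leadingCoeff generalizing p
  · have hlead₀ : p.leadingCoeff ≠ 0 := leadingCoeff_ne_zero.2 fun h ↦ by simp [h] at hodd
    obtain ⟨e, he⟩ := this (p := -p) (by rwa [natDegree_neg]) (by simpa using hp')
      (by rw [leadingCoeff_neg]; exact neg_pos.2 ((not_lt.1 hlead).lt_of_ne hlead₀))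
    exact ⟨e.trans (Homeomorph.neg ℝ), fun t ↦ by simp [he]⟩
  have hbot := tendsto_eval_atBot_atBot_of_odd_natDegree hodd hlead
  have htop : Tendsto (fun t ↦ p.eval t) atTop atTop :=
    p.tendsto_atTop_of_leadingCoeff_nonneg (natDegree_pos_iff_degree_pos.1 hodd.pos) hlead.le
  have hmono := strictMono_of_deriv_ne_zero_of_ne p.hasDerivAt hp' hbot htop
  exact ⟨(hmono.orderIsoOfSurjective _ (p.continuous.surjective htop hbot)).toHomeomorph,
    fun t ↦ rfl⟩

theorem stmt_3_general {p q : ℝ[X]} {t₀ s₀ : ℝ} (hodd : Odd p.natDegree)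
    (hdeg : p.natDegree = q.natDegree) (hp' : ∀ t, p.derivative.eval t = 0 → t = t₀)
    (hq' : ∀ s, q.derivative.eval s = 0 → s = s₀)
    (hmult : multAt (fun t ↦ p.eval t) t₀ = multAt (fun s ↦ q.eval s) s₀)
    (hsign : SignType.sign (p.eval t₀) = SignType.sign (q.eval s₀)) :
    LipschitzEquivFun (fun t ↦ p.eval t) (fun s ↦ q.eval s) := by
  obtain ⟨e, he⟩ := exists_homeomorph_eval_eq hodd hp'
  obtain ⟨e', he'⟩ := exists_homeomorph_eval_eq (hdeg ▸ hodd) hq'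
  obtain ⟨c, hc, hcq⟩ := exists_pos_mul_eq_of_sign_eq hsign
  let φ : ℝ ≃ₜ ℝ := e.trans ((Homeomorph.mulLeft₀ c hc.ne').trans e'.symm)
  have hφ (t : ℝ) : q.eval (φ t) = c * p.eval t := by simp [φ, ← he, ← he']
  have root_iff {r : ℝ[X]} {ψ : ℝ ≃ₜ ℝ} (hψ : ∀ t, ψ t = r.eval t) (a t : ℝ) :
      (r - C (r.eval a)).eval t = 0 ↔ t = a := by
    simp [sub_eq_zero, ← hψ]
  rw [multAt_eval_eq_rootMultiplicity hodd.pos.ne',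
    multAt_eval_eq_rootMultiplicity (hdeg ▸ hodd.pos.ne')] at hmult
  have normalized_natDegree :
      (p - C (p.eval t₀)).natDegree = (q - C (q.eval s₀)).natDegree := by simpa
  obtain ⟨K, hK⟩ := exists_lipschitzWith_of_eval_comp_eq_s3 (root_iff he t₀) (by simpa)
    (root_iff he' s₀) (by simpa) normalized_natDegree hmult φ.continuous hc.ne' fun t ↦ by
      simp [hφ, ← hcq, mul_sub]
  obtain ⟨K', hK'⟩ := exists_lipschitzWith_of_eval_comp_eq_s3 (root_iff he' s₀) (by simpa)
    (root_iff he t₀) (by simpa) normalized_natDegree.symm hmult.symm φ.symm.continuous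
    (inv_ne_zero hc.ne') fun s ↦ by
      obtain ⟨t, rfl⟩ := φ.surjective s
      simp [hφ, ← hcq, ← mul_sub, hc.ne']
  exact lipschitzEquivFun_of_equiv φ.toEquiv hK hK' hc hφ

/-- Two polynomial functions of the same odd degree `d ≥ 1`, each with exactly one
critical point, of the same multiplicity `k`, and with values of the same sign at the
critical points, are Lipschitz equivalent. -/
theorem stmt_3 (p q : Polynomial ℝ) (d : ℕ) (hd : 1 ≤ d) (hodd : Odd d)
    (hp : p.natDegree = d) (hq : q.natDegree = d)
    (t₀ s₀ : ℝ) (k : ℕ)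
    (ht₀ : ∀ t : ℝ, p.derivative.eval t = 0 ↔ t = t₀)
    (hs₀ : ∀ t : ℝ, q.derivative.eval t = 0 ↔ t = s₀)
    (hkf : multAt (fun x => p.eval x) t₀ = k)
    (hkg : multAt (fun x => q.eval x) s₀ = k)
    (hsign : (0 < p.eval t₀ ∧ 0 < q.eval s₀) ∨ (p.eval t₀ < 0 ∧ q.eval s₀ < 0) ∨
      (p.eval t₀ = 0 ∧ q.eval s₀ = 0)) :
    LipschitzEquivFun (fun x => p.eval x) (fun x => q.eval x) :=
  stmt_3_general (hp ▸ hodd) (hp.trans hq.symm) (fun t ↦ (ht₀ t).1) (fun s ↦ (hs₀ s).1)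
    (hkf.trans hkg.symm) (by rcases hsign with h | h | h <;> simp [h.1, h.2])
end

section
/- Let (G, ·) be a group and let α : G → Aut(G) be a group homomorphism satisfying: (i) α ∘ φ = α for every φ in the image of α (that is, α(φ(g)) = α(g) for all g ∈ G and all φ ∈ Im α), and (ii) the image of α is an abelian subgroup of Aut(G). Define a new binary operation on G by g ∘ h := (α(h)(g)) · h. Then (G, ∘) is a group: ∘ is associative, the identity element 1 of (G, ·) is a two-sided identity for ∘, and every g ∈ G has a two-sided ∘-inverse, namely α(g⁻¹)(g⁻¹). -/
/-!
Associativity of `g ∘ h = γ h g * h` amounts to `γ` being an antihomomorphism from `(G, ∘)` to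
`MulAut G`. When `γ` is also a homomorphism for the original product, this says that
`γ (γ h g)` is the conjugate of `γ g` by `γ h`, as for a crossed module. If the image of `γ` is
abelian, that conjugate is `γ g`, so the condition becomes `γ ∘ φ = γ` for `φ ∈ Im γ`.
-/

/-- A gamma function, as in the theory of skew braces: a map `γ` into automorphisms from which
`gammaMul γ` inherits associativity. The usual identity `γ (g ^ γ h * h) = γ g * γ h` is for
automorphisms acting on the right; they act on the left here, which reverses the right-hand
side. -/
def IsGammaFunction {M : Type*} [Mul M] (γ : M → MulAut M) : Prop :=
  ∀ g h : M, γ (γ h g * h) = γ h * γ g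

/-- The circle operation `g ∘ h` attached to `γ`, in which the right factor acts on the left
factor. -/
def gammaMul {M : Type*} [Mul M] (γ : M → MulAut M) (g h : M) : M :=
  γ h g * h

theorem one_gammaMul {M : Type*} [MulOneClass M] (γ : M → MulAut M) (g : M) :
    gammaMul γ 1 g = g := by
  rw [gammaMul, map_one, one_mul]

theorem inv_apply_inv_gammaMul {G : Type*} [Group G] (γ : G → MulAut G) (g : G) :
    gammaMul γ ((γ g)⁻¹ g⁻¹) g = 1 := by
  rw [gammaMul, MulAut.apply_inv_self, inv_mul_cancel]

namespace IsGammaFunction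

theorem gammaMul_assoc {S : Type*} [Semigroup S] {γ : S → MulAut S} (hγ : IsGammaFunction γ)
    (a b c : S) : gammaMul γ (gammaMul γ a b) c = gammaMul γ a (gammaMul γ b c) :=
  calc γ c (γ b a * b) * c
    _ = (γ c * γ b) a * (γ c b * c) := by rw [map_mul, MulAut.mul_apply, mul_assoc]
    _ = γ (γ c b * c) a * (γ c b * c) := by rw [hγ b c]

theorem gammaMul_one {M : Type*} [MulOneClass M] {γ : M → MulAut M} (hγ : IsGammaFunction γ)
    (g : M) : gammaMul γ g 1 = g := by
  have map_one_mul_self : γ 1 * γ 1 = γ 1 := by rw [← hγ, map_one, one_mul]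
  rw [gammaMul, mul_eq_right.mp map_one_mul_self, MulAut.one_apply, mul_one]

/-- The group `(G, ∘)` attached to a gamma function on `G`, built from its left-handed axioms so
that right inverses come for free. -/
abbrev group {G : Type*} [Group G] {γ : G → MulAut G} (hγ : IsGammaFunction γ) : Group G :=
  @Group.ofLeftAxioms G ⟨gammaMul γ⟩ ⟨fun g => (γ g)⁻¹ g⁻¹⟩ ⟨1⟩
    hγ.gammaMul_assoc (one_gammaMul γ) (inv_apply_inv_gammaMul γ)

theorem gammaMul_inv_apply_inv {G : Type*} [Group G] {γ : G → MulAut G} (hγ : IsGammaFunction γ)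
    (g : G) : gammaMul γ g ((γ g)⁻¹ g⁻¹) = 1 :=
  @mul_inv_cancel G hγ.group g

end IsGammaFunction

theorem stmt_6_general {G : Type*} [Group G] (α : G →* MulAut G)
    (hα : ∀ g h : G, α (α h g) = α h * α g * (α h)⁻¹) :
    (∀ a b c : G, gammaMul α (gammaMul α a b) c = gammaMul α a (gammaMul α b c)) ∧
    (∀ g : G, gammaMul α 1 g = g ∧ gammaMul α g 1 = g) ∧
    (∀ g : G, gammaMul α (α g⁻¹ g⁻¹) g = 1 ∧ gammaMul α g (α g⁻¹ g⁻¹) = 1) := by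
  have hγ : IsGammaFunction α := fun g h => by rw [map_mul, hα, inv_mul_cancel_right]
  simp only [map_inv α]
  exact ⟨hγ.gammaMul_assoc,
    fun g => ⟨one_gammaMul α g, hγ.gammaMul_one g⟩,
    fun g => ⟨inv_apply_inv_gammaMul α g, hγ.gammaMul_inv_apply_inv g⟩⟩

/-- Given a group `(G, ·)` and a homomorphism `α : G → Aut(G)` with `α ∘ φ = α` for all
`φ ∈ Im α` and with `Im α` abelian, the operation `g ∘ h := (α h) g · h` makes `G` a
group: it is associative, `1` is a two-sided identity, and `α (g⁻¹) (g⁻¹)` is a two-sided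
inverse of `g`. -/
theorem stmt_6 {G : Type*} [Group G] (α : G →* MulAut G)
    (h1 : ∀ g h : G, α ((α h) g) = α g)
    (h2 : ∀ g h : G, α g * α h = α h * α g) :
    let op : G → G → G := fun g h => (α h) g * h
    (∀ g₁ g₂ g₃ : G, op (op g₁ g₂) g₃ = op g₁ (op g₂ g₃)) ∧
    (∀ g : G, op 1 g = g ∧ op g 1 = g) ∧
    (∀ g : G, op ((α g⁻¹) g⁻¹) g = 1 ∧ op g ((α g⁻¹) g⁻¹) = 1) :=
  stmt_6_general α fun g h => by rw [h1, h2 h g, mul_inv_cancel_right]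
end

section
/- Let (G, ·) be a group and α : G → Aut(G) a group homomorphism with α ∘ φ = α for all φ ∈ Im α and with Im α abelian, and let (G, ∘) be the group with operation g ∘ h := (α(h)(g)) · h. Let X be a set, let • : X × G → X be a right action of (G, ·) (so x • 1 = x and (x • g) • h = x • (g·h)), and let A be a group homomorphism from (G, ∘) to the group of bijections of X such that: (I) A(h)(x • g) = (A(h)(x)) • α(h)(g) for all x ∈ X and g, h ∈ G, and (II) the image of A is an abelian subgroup of the group of bijections of X. Then the map defined by x ∘ g := (A(g)(x)) • g is a right action of (G, ∘) on X: x ∘ 1 = x and (x ∘ g) ∘ h = x ∘ (g ∘ h) for all x ∈ X and g, h ∈ G. -/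
/-!
A homomorphism from `(G, ∘)` to the bijections of `X` is a left action; since its image is
abelian, it is also a right action. So `x ∘ g` composes two right actions, one of `(G, ∘)` and
one of `(G, ·)`. In `(x ∘ g) ∘ h`, condition (I) moves the first action of `h` past the second
action of `g`, which brings the two actions of each kind together.
-/

section RightAction

variable {M X : Type*}

/-- `act` is a right action on `X` of `M` with product `mul` and identity `e`. The operations are
explicit arguments because two products on the same type are compared; no laws are imposed on
them. -/
structure IsRightAction (e : M) (mul : M → M → M) (act : X → M → X) : Prop where
  act_one (x : X) : act x e = x
  act_act (x : X) (g h : M) : act (act x g) h = act x (mul g h)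

theorem IsRightAction.of_hom_of_commute {N : Type*} [Monoid N] [MulAction N X]
    {e : M} {mul : M → M → M} {A : M → N} (map_one : A e = 1)
    (map_mul : ∀ g h, A (mul g h) = A g * A h) (comm : ∀ g h, Commute (A g) (A h)) :
    IsRightAction e mul fun (x : X) g ↦ A g • x where
  act_one x := by rw [map_one, one_smul]
  act_act x g h := by rw [smul_smul, map_mul, (comm g h).eq]

/-- The product `g ∘ h = σ h g * h`, where `σ h` plays the role of the automorphism `α(h)`. -/
def twistedMul [Mul M] (σ : M → M → M) (g h : M) : M := σ h g * h

theorem stmt_7_general [One M] [Mul M] {σ : M → M → M} {act β : X → M → X}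
    (hact : IsRightAction 1 (· * ·) act) (hβ : IsRightAction 1 (twistedMul σ) β)
    (hI : ∀ x g h, β (act x g) h = act (β x h) (σ h g)) :
    IsRightAction 1 (twistedMul σ) fun x g ↦ act (β x g) g where
  act_one x := by rw [hβ.act_one, hact.act_one]
  act_act x g h := calc
    act (β (act (β x g) g) h) h = act (act (β (β x g) h) (σ h g)) h := by rw [hI]
    _ = act (β (β x g) h) (twistedMul σ g h) := hact.act_act _ _ _
    _ = act (β x (twistedMul σ g h)) (twistedMul σ g h) := by rw [hβ.act_act]

end RightAction

/-- Given a group `(G, ·)`, a homomorphism `α : G → Aut(G)` with `α ∘ φ = α` for all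
`φ ∈ Im α` and `Im α` abelian, and the modified group `(G, ∘)` with
`g ∘ h := (α h) g · h`; given a right action `act` of `(G, ·)` on a set `X` and a group
homomorphism `A` from `(G, ∘)` to the bijections of `X` satisfying
(I) `A h (x • g) = (A h x) • (α h) g` and (II) `Im A` abelian, the map
`x ∘ g := (A g x) • g` is a right action of `(G, ∘)` on `X`. -/
theorem stmt_7 {G : Type*} [Group G] {X : Type*} (α : G →* MulAut G)
    (h1 : ∀ g h : G, α ((α h) g) = α g)
    (h2 : ∀ g h : G, α g * α h = α h * α g)
    (act : X → G → X)
    (hact1 : ∀ x : X, act x 1 = x)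
    (hact2 : ∀ (x : X) (g h : G), act (act x g) h = act x (g * h))
    (A : G → Equiv.Perm X)
    (hA1 : A 1 = 1)
    (hAhom : ∀ g h : G, A ((α h) g * h) = A g * A h)
    (hI : ∀ (x : X) (g h : G), (A h) (act x g) = act ((A h) x) ((α h) g))
    (hII : ∀ g h : G, A g * A h = A h * A g) :
    let op : G → G → G := fun g h => (α h) g * h
    let act' : X → G → X := fun x g => act ((A g) x) g
    (∀ x : X, act' x 1 = x) ∧
    (∀ (x : X) (g h : G), act' (act' x g) h = act' x (op g h)) := by
  have hA : IsRightAction 1 (twistedMul fun h g ↦ α h g) fun (x : X) g ↦ A g • x :=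
    .of_hom_of_commute hA1 hAhom hII
  have hact' := stmt_7_general ⟨hact1, hact2⟩ hA hI
  exact ⟨hact'.act_one, hact'.act_act⟩
end

section
/- Let β be a rational number with β > 1. Let λ₁, λ₂ be nonzero real numbers with λ₁λ₂ > 0 and let φ₁, φ₂ : ℝ → ℝ be bi-Lipschitz homeomorphisms such that for i = 1, 2 there are nonconstant real polynomial functions fᵢ, gᵢ with gᵢ ∘ φᵢ = fᵢ, and suppose there are real numbers L₁, L₂ with φᵢ(t)/t → Lᵢ as |t| → +∞ and |λ₁|^β·L₁ = |λ₂|^β·L₂. Define Φ : ℝ² → ℝ² by Φ(x, y) := (λ₁x, |λ₁|^β·x^β·φ₁(y/x^β)) for x > 0, Φ(x, y) := (λ₂x, |λ₂|^β·|x|^β·φ₂(y/|x|^β)) for x < 0, and Φ(0, y) := (0, |λ₁|^β·L₁·y). Then there exists δ > 0 such that Φ is Lipschitz on the strip {(x, y) ∈ ℝ² : |x| < δ}. -/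
open Filter Topology

/-!
Let `q ∘ φ = p` with `φ t / t → L ≠ 0` as `|t| → ∞`, and let `n = deg q`. Differentiating,
`q'(φ) (φ - t φ') = (φ q'(φ) - n q(φ)) - (t p' - n p)`. By Euler's identity the right-hand side
loses one degree, so it is `O(t ^ (n - 1)) = O(q'(φ))`: the tangent lines of the graph of `φ` have
bounded intercepts near infinity. Pompeiu's mean value theorem passes from tangents to secants, and
the common slope `L` at both ends, with `φ` Lipschitz, extends the bound to all secants.

A bound on the intercepts of the secants of `φ` says exactly that the homogeneous function
`(u, y) ↦ u φ(y / u)`, extended by `L y` at `u = 0`, is Lipschitz in `u`. On each side of the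
`y`-axis, the second component of `Φ` is a multiple of this function evaluated at `(|x| ^ β, y)`,
and `x ↦ |x| ^ β` is Lipschitz on bounded sets.
-/

open Asymptotics Bornology Polynomial Set
open scoped NNReal

section PolynomialGrowth

theorem natDegree_X_mul_derivative_sub_le {R : Type*} [CommRing R] {p : R[X]} {n : ℕ}
    (hp : p.natDegree ≤ n) : (X * derivative p - C (n : R) * p).natDegree ≤ n - 1 := by
  refine natDegree_le_iff_coeff_eq_zero.2 fun m hm => ?_
  obtain ⟨k, rfl⟩ : ∃ k, m = k + 1 := ⟨m - 1, by omega⟩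
  rw [coeff_sub, coeff_X_mul, coeff_derivative, coeff_C_mul]
  obtain rfl | hk : n = k + 1 ∨ n < k + 1 := by omega
  · push_cast
    ring
  · simp [coeff_eq_zero_of_natDegree_lt (hp.trans_lt hk)]

variable {𝕜 : Type*}

theorem isTheta_eval_cobounded [NormedField 𝕜] {p : 𝕜[X]} (hp : p ≠ 0) :
    (fun t => p.eval t) =Θ[cobounded 𝕜] fun t => t ^ p.natDegree :=
  isEquivalent_cobounded_leading_monomial.isTheta.trans <|
    (isTheta_const_mul_left (leadingCoeff_ne_zero.2 hp)).2 (isTheta_refl _ _)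

variable [NontriviallyNormedField 𝕜]

theorem isBigO_eval_cobounded_pow_iff {p : 𝕜[X]} {n : ℕ} :
    (fun t => p.eval t) =O[cobounded 𝕜] (fun t => t ^ n) ↔ p.natDegree ≤ n := by
  obtain rfl | hp := eq_or_ne p 0
  · simpa using isBigO_zero _ _
  refine (isTheta_eval_cobounded hp).isBigO_congr_left.trans
    ⟨fun h => ?_, isBigO_pow_pow_cobounded_of_le⟩
  by_contra! hn
  refine isLittleO_irrefl ?_ (h.trans_isLittleO (isLittleO_pow_pow_cobounded_of_lt hn))
  exact ((eventually_ne_cobounded 0).mono fun t ht => pow_ne_zero _ ht).frequently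

variable {φ : 𝕜 → 𝕜} {p q : 𝕜[X]}

theorem tendsto_cobounded_of_isTheta_id (hφ : φ =Θ[cobounded 𝕜] id) :
    Tendsto φ (cobounded 𝕜) (cobounded 𝕜) :=
  tendsto_norm_atTop_iff_cobounded.1 <|
    hφ.tendsto_norm_atTop_iff.2 tendsto_norm_cobounded_atTop

theorem isBigO_eval_comp_pow (hφ : φ =Θ[cobounded 𝕜] id) {n : ℕ} (hq : q.natDegree ≤ n) :
    (fun t => q.eval (φ t)) =O[cobounded 𝕜] fun t => t ^ n :=
  ((isBigO_eval_cobounded_pow_iff.2 hq).comp_tendsto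
    (tendsto_cobounded_of_isTheta_id hφ)).trans (hφ.1.pow n)

theorem isBigO_pow_eval_comp (hφ : φ =Θ[cobounded 𝕜] id) (hq : q ≠ 0) :
    (fun t => t ^ q.natDegree) =O[cobounded 𝕜] fun t => q.eval (φ t) :=
  (hφ.2.pow _).trans <|
    (isTheta_eval_cobounded hq).2.comp_tendsto (tendsto_cobounded_of_isTheta_id hφ)

theorem isBigO_pow_derivative_eval_comp [CharZero 𝕜] (hφ : φ =Θ[cobounded 𝕜] id)
    (hq : 0 < q.natDegree) :
    (fun t => t ^ (q.natDegree - 1)) =O[cobounded 𝕜] fun t => (derivative q).eval (φ t) := by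
  rw [← natDegree_derivative]
  exact isBigO_pow_eval_comp hφ fun h => hq.ne' (derivative_eq_zero.1 h)

theorem eventually_derivative_eval_comp_ne_zero [CharZero 𝕜] (hφ : φ =Θ[cobounded 𝕜] id)
    (hq : 0 < q.natDegree) : ∀ᶠ t in cobounded 𝕜, (derivative q).eval (φ t) ≠ 0 := by
  filter_upwards [(isBigO_pow_derivative_eval_comp hφ hq).eq_zero_imp, eventually_ne_cobounded 0]
    with t ht ht0 h
  exact pow_ne_zero _ ht0 (ht h)

theorem mul_derivative_eval_comp_sub_isBigO [CharZero 𝕜] (hφ : φ =Θ[cobounded 𝕜] id)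
    (hq : 0 < q.natDegree) (hpq : ∀ t, q.eval (φ t) = p.eval t) :
    (fun t => φ t * (derivative q).eval (φ t) - t * (derivative p).eval t)
      =O[cobounded 𝕜] fun t => (derivative q).eval (φ t) := by
  set n := q.natDegree
  have hp : p.natDegree ≤ n := by
    simpa only [← isBigO_eval_cobounded_pow_iff, hpq] using isBigO_eval_comp_pow hφ (le_refl n)
  have euler_p := isBigO_eval_cobounded_pow_iff.2 (natDegree_X_mul_derivative_sub_le hp)
  have euler_q := isBigO_eval_comp_pow hφ (natDegree_X_mul_derivative_sub_le (le_refl n))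
  refine ((euler_q.sub euler_p).congr_left fun t => ?_).trans
    (isBigO_pow_derivative_eval_comp hφ hq)
  simp only [eval_sub, eval_mul, eval_X, eval_C, hpq]
  ring

end PolynomialGrowth

section Derivative

variable {𝕜 : Type*} [NontriviallyNormedField 𝕜] [CompleteSpace 𝕜] {φ : 𝕜 → 𝕜}

theorem hasDerivAt_of_comp_eventuallyEq {p q : 𝕜 → 𝕜} {p' q' t : 𝕜} (hφ : ContinuousAt φ t)
    (hp : HasDerivAt p p' t) (hq : HasStrictDerivAt q q' (φ t)) (hq' : q' ≠ 0)
    (hpq : q ∘ φ =ᶠ[𝓝 t] p) : HasDerivAt φ (q'⁻¹ * p') t := by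
  have hinv : HasDerivAt (hq.localInverse q q' (φ t) hq') q'⁻¹ (p t) :=
    hpq.eq_of_nhds ▸ (hq.to_localInverse hq').hasDerivAt
  refine (hinv.comp t hp).congr_of_eventuallyEq ?_
  filter_upwards [hφ.eventually (hq.eventually_left_inverse hq'), hpq] with s hs hpqs
  rw [Function.comp_apply, ← hpqs, Function.comp_apply, hs]

theorem hasDerivAt_of_eval_comp_eq {p q : 𝕜[X]} {t : 𝕜} (hφ : ContinuousAt φ t)
    (hpq : ∀ t, q.eval (φ t) = p.eval t) (hq : (derivative q).eval (φ t) ≠ 0) :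
    HasDerivAt φ (((derivative q).eval (φ t))⁻¹ * (derivative p).eval t) t :=
  hasDerivAt_of_comp_eventuallyEq hφ (p.hasDerivAt t) (q.hasStrictDerivAt (φ t)) hq
    (Eventually.of_forall hpq)

theorem eventually_differentiableAt_of_eval_comp_eq [CharZero 𝕜] {p q : 𝕜[X]} (hφ : Continuous φ)
    (hΘ : φ =Θ[cobounded 𝕜] id) (hq : 0 < q.natDegree) (hpq : ∀ t, q.eval (φ t) = p.eval t) :
    ∀ᶠ t in cobounded 𝕜, DifferentiableAt 𝕜 φ t :=
  (eventually_derivative_eval_comp_ne_zero hΘ hq).mono fun _ ht =>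
    (hasDerivAt_of_eval_comp_eq hφ.continuousAt hpq ht).differentiableAt

theorem sub_mul_deriv_isBigO_one_of_eval_comp_eq [CharZero 𝕜] {p q : 𝕜[X]} (hφ : Continuous φ)
    (hΘ : φ =Θ[cobounded 𝕜] id) (hq : 0 < q.natDegree) (hpq : ∀ t, q.eval (φ t) = p.eval t) :
    (fun t => φ t - t * deriv φ t) =O[cobounded 𝕜] fun _ => (1 : 𝕜) := by
  have hne := eventually_derivative_eval_comp_ne_zero hΘ hq
  refine ((mul_derivative_eval_comp_sub_isBigO hΘ hq hpq).mul
    (isBigO_refl (fun t => ((derivative q).eval (φ t))⁻¹) _)).congr' ?_ ?_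
  · filter_upwards [hne] with t ht
    rw [(hasDerivAt_of_eval_comp_eq hφ.continuousAt hpq ht).deriv]
    field_simp
  · exact hne.mono fun t ht => mul_inv_cancel₀ ht

end Derivative

/-- **Pompeiu's mean value theorem**: the secant through `(a, φ a)` and `(b, φ b)` has the same
intercept with the vertical axis as the tangent at some intermediate point. -/
theorem exists_secant_intercept_eq_tangent_intercept {φ φ' : ℝ → ℝ} {a b : ℝ} (hab : a < b)
    (h0 : 0 ∉ Icc a b) (hφ : ContinuousOn φ (Icc a b))
    (hφ' : ∀ t ∈ Ioo a b, HasDerivAt φ (φ' t) t) :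
    ∃ c ∈ Ioo a b, b * φ a - a * φ b = (b - a) * (φ c - c * φ' c) := by
  have hne : ∀ t ∈ Icc a b, t ≠ 0 := fun t ht ht0 => h0 (ht0 ▸ ht)
  obtain ⟨c, hc, hslope⟩ := exists_ratio_hasDerivAt_eq_ratio_slope
    (fun t => φ t / t) (fun t => (φ' t * t - φ t * 1) / t ^ 2) hab
    (hφ.div continuousOn_id hne)
    (fun t ht => (hφ' t ht).div (hasDerivAt_id t) (hne t (Ioo_subset_Icc_self ht)))
    (fun t => t⁻¹) (fun t => -(t ^ 2)⁻¹) (continuousOn_id.inv₀ hne)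
    (fun t ht => hasDerivAt_inv (hne t (Ioo_subset_Icc_self ht)))
  have ha := hne a (left_mem_Icc.2 hab.le)
  have hb := hne b (right_mem_Icc.2 hab.le)
  have hc0 := hne c (Ioo_subset_Icc_self hc)
  refine ⟨c, hc, ?_⟩
  field_simp at hslope
  linarith

/-- The line through any two points of the graph of `φ` above `s` meets the vertical axis at height
at most `C` in absolute value. The denominator `y - x` is cleared, so that the condition is
vacuous for `x = y`. -/
def SecantInterceptBoundOn (φ : ℝ → ℝ) (C : ℝ) (s : Set ℝ) : Prop :=
  ∀ x ∈ s, ∀ y ∈ s, |y * φ x - x * φ y| ≤ C * |y - x|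

namespace SecantInterceptBoundOn

variable {φ : ℝ → ℝ} {C L T : ℝ} {s t : Set ℝ}

theorem of_abs_sub_mul_deriv_le (hs : s.OrdConnected) (h0 : 0 ∉ s)
    (hdiff : ∀ x ∈ s, DifferentiableAt ℝ φ x) (hC : ∀ x ∈ s, |φ x - x * deriv φ x| ≤ C) :
    SecantInterceptBoundOn φ C s := by
  intro x hx y hy
  wlog hxy : x ≤ y generalizing x y
  · rw [abs_sub_comm, abs_sub_comm y]
    exact this y hy x hx (le_of_not_ge hxy)
  obtain rfl | hlt := hxy.eq_or_lt
  · simp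
  have hsub : Icc x y ⊆ s := hs.out hx hy
  obtain ⟨c, hc, hsecant⟩ := exists_secant_intercept_eq_tangent_intercept hlt (fun h => h0 (hsub h))
    (fun z hz => (hdiff z (hsub hz)).continuousAt.continuousWithinAt)
    (fun z hz => (hdiff z (hsub (Ioo_subset_Icc_self hz))).hasDerivAt)
  rw [hsecant, abs_mul, mul_comm]
  gcongr
  exact hC c (hsub (Ioo_subset_Icc_self hc))

theorem abs_sub_mul_le (h : SecantInterceptBoundOn φ C s) {l : Filter ℝ} [l.NeBot]
    (hl : l ≤ cobounded ℝ) (hs : s ∈ l) (hlim : Tendsto (fun y => φ y / y) l (𝓝 L)) {x : ℝ}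
    (hx : x ∈ s) : |φ x - L * x| ≤ C := by
  have hleft : Tendsto (fun y => |φ x - φ y / y * x|) l (𝓝 |φ x - L * x|) :=
    (tendsto_const_nhds.sub (hlim.mul_const x)).abs
  have hright : Tendsto (fun y => C * |1 - x * y⁻¹|) l (𝓝 (C * |1 - x * 0|)) :=
    ((tendsto_const_nhds.sub ((tendsto_inv₀_cobounded.mono_left hl).const_mul x)).abs).const_mul C
  have hle := le_of_tendsto_of_tendsto hleft hright <| by
    filter_upwards [hs, hl (eventually_ne_cobounded 0)] with y hy hy0
    have hsecant : φ x - φ y / y * x = (y * φ x - x * φ y) / y := by field_simp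
    have hone : 1 - x * y⁻¹ = (y - x) / y := by field_simp
    rw [hsecant, hone, abs_div, abs_div, ← mul_div_assoc]
    gcongr
    exact h x hx y hy
  simpa using hle

theorem union (hs : SecantInterceptBoundOn φ C s) (ht : SecantInterceptBoundOn φ C t)
    (hs0 : s ⊆ Iic 0) (ht0 : t ⊆ Ici 0) (hL : ∀ x ∈ s ∪ t, |φ x - L * x| ≤ C) :
    SecantInterceptBoundOn φ C (s ∪ t) := by
  have opposite : ∀ x ∈ s, ∀ y ∈ t, |y * φ x - x * φ y| ≤ C * |y - x| := by
    intro x hx y hy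
    have hx0 : x ≤ 0 := hs0 hx
    have hy0 : 0 ≤ y := ht0 hy
    calc |y * φ x - x * φ y| = |y * (φ x - L * x) - x * (φ y - L * y)| := by ring_nf
      _ ≤ |y| * |φ x - L * x| + |x| * |φ y - L * y| := by
        simpa only [abs_mul] using abs_sub (y * (φ x - L * x)) (x * (φ y - L * y))
      _ ≤ |y| * C + |x| * C := by
        gcongr
        exacts [hL x (.inl hx), hL y (.inr hy)]
      _ = C * |y - x| := by
        rw [abs_of_nonneg hy0, abs_of_nonpos hx0, abs_of_nonneg (by linarith)]
        ring
  rintro x (hx | hx) y (hy | hy)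
  · exact hs x hx y hy
  · exact opposite x hx y hy
  · rw [abs_sub_comm, abs_sub_comm y]
    exact opposite y hy x hx
  · exact ht x hx y hy

theorem setOf_lt_abs (hT : 0 ≤ T) (hlim : Tendsto (fun y => φ y / y) (cobounded ℝ) (𝓝 L))
    (hdiff : ∀ x, T < |x| → DifferentiableAt ℝ φ x)
    (hC : ∀ x, T < |x| → |φ x - x * deriv φ x| ≤ C) :
    SecantInterceptBoundOn φ C {x | T < |x|} := by
  have hset : {x : ℝ | T < |x|} = Iio (-T) ∪ Ioi T := by
    ext x
    simp only [mem_ofPred_eq, mem_union, mem_Iio, mem_Ioi, lt_abs, lt_neg, or_comm]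
  have hsub : Iio (-T) ∪ Ioi T ⊆ {x : ℝ | T < |x|} := hset.ge
  have hneg : SecantInterceptBoundOn φ C (Iio (-T)) :=
    of_abs_sub_mul_deriv_le ordConnected_Iio (by simpa using hT)
      (fun x hx => hdiff x (hsub (.inl hx))) (fun x hx => hC x (hsub (.inl hx)))
  have hpos : SecantInterceptBoundOn φ C (Ioi T) :=
    of_abs_sub_mul_deriv_le ordConnected_Ioi (by simpa using hT)
      (fun x hx => hdiff x (hsub (.inr hx))) (fun x hx => hC x (hsub (.inr hx)))
  rw [hset]
  refine hneg.union (L := L) hpos (fun x hx => ?_) (fun x hx => hT.trans hx.le) ?_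
  · exact hx.le.trans (neg_nonpos.2 hT)
  · rintro x (hx | hx)
    · exact hneg.abs_sub_mul_le IsOrderBornology.atBot_le_cobounded (Iio_mem_atBot _)
        (hlim.mono_left IsOrderBornology.atBot_le_cobounded) hx
    · exact hpos.abs_sub_mul_le IsOrderBornology.atTop_le_cobounded (Ioi_mem_atTop _)
        (hlim.mono_left IsOrderBornology.atTop_le_cobounded) hx

end SecantInterceptBoundOn

section Lipschitz

variable {φ : ℝ → ℝ} {C L T : ℝ} {K : ℝ≥0}

theorem abs_mul_sub_mul_le_of_lipschitzWith (hφ : LipschitzWith K φ) {x : ℝ} (hx : |x| ≤ T)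
    (y : ℝ) : |y * φ x - x * φ y| ≤ (|φ 0| + 2 * K * T) * |y - x| := by
  have hφx : |φ x| ≤ |φ 0| + K * T := by
    have hdist : |φ x - φ 0| ≤ K * |x| := by simpa [Real.dist_eq] using hφ.dist_le_mul x 0
    calc |φ x| ≤ |φ 0| + |φ x - φ 0| := by simpa using abs_add_le (φ 0) (φ x - φ 0)
      _ ≤ |φ 0| + K * T := by grw [hdist, hx]
  have hφxy : |φ y - φ x| ≤ K * |y - x| := hφ.dist_le_mul y x
  calc |y * φ x - x * φ y| = |(y - x) * φ x - x * (φ y - φ x)| := by ring_nf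
    _ ≤ |y - x| * |φ x| + |x| * |φ y - φ x| := by
      simpa only [abs_mul] using abs_sub ((y - x) * φ x) (x * (φ y - φ x))
    _ ≤ |y - x| * (|φ 0| + K * T) + T * (K * |y - x|) := by
      gcongr
      exact (abs_nonneg x).trans hx
    _ = (|φ 0| + 2 * K * T) * |y - x| := by ring

theorem SecantInterceptBoundOn.univ_of_lipschitzWith (hφ : LipschitzWith K φ)
    (h : SecantInterceptBoundOn φ C {x | T < |x|}) :
    SecantInterceptBoundOn φ (max C (|φ 0| + 2 * K * T)) univ := by
  intro x _ y _
  rcases le_or_gt |x| T with hx | hx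
  · grw [abs_mul_sub_mul_le_of_lipschitzWith hφ hx y, ← le_max_right]
  rcases le_or_gt |y| T with hy | hy
  · rw [abs_sub_comm, abs_sub_comm y]
    grw [abs_mul_sub_mul_le_of_lipschitzWith hφ hy x, ← le_max_right]
  · grw [h x hx y hy, ← le_max_left]

theorem exists_secantInterceptBoundOn_univ (hφ : LipschitzWith K φ)
    (hlim : Tendsto (fun t => φ t / t) (cobounded ℝ) (𝓝 L))
    (hdiff : ∀ᶠ t in cobounded ℝ, DifferentiableAt ℝ φ t)
    (hO : (fun t => φ t - t * deriv φ t) =O[cobounded ℝ] fun _ => (1 : ℝ)) :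
    ∃ C, SecantInterceptBoundOn φ C univ := by
  obtain ⟨C, hC⟩ := hO.bound
  obtain ⟨T, -, hT⟩ := hasBasis_cobounded_norm.eventually_iff.1 (hdiff.and hC)
  have hT' : ∀ t : ℝ, max T 0 < |t| → T ≤ ‖t‖ := fun t ht => (le_max_left T 0).trans ht.le
  refine ⟨_, .univ_of_lipschitzWith hφ (.setOf_lt_abs (C := C) (le_max_right T 0) hlim ?_ ?_)⟩
  · exact fun t ht => (hT (hT' t ht)).1
  · exact fun t ht => by simpa using (hT (hT' t ht)).2

theorem ne_zero_of_antilipschitzWith_of_tendsto_div (hφ : AntilipschitzWith K φ)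
    (hlim : Tendsto (fun t => φ t / t) (cobounded ℝ) (𝓝 L)) : L ≠ 0 := by
  have hslope : Tendsto (fun t => (φ t - φ 0) / t) (cobounded ℝ) (𝓝 L) := by
    have h := hlim.sub (tendsto_inv₀_cobounded.const_mul (φ 0))
    rw [mul_zero, sub_zero] at h
    exact h.congr fun t => by ring
  have hone : 1 ≤ K * |L| := by
    refine ge_of_tendsto (hslope.abs.const_mul (K : ℝ)) ?_
    filter_upwards [eventually_ne_cobounded 0] with t ht
    rw [abs_div, ← mul_div_assoc, one_le_div (abs_pos.2 ht)]
    simpa [Real.dist_eq] using hφ.le_mul_dist t 0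
  rintro rfl
  norm_num at hone

theorem ne_zero_of_lipschitzWith_invFun_of_tendsto_div (hφ : φ.Injective)
    (hinv : ∃ K : ℝ≥0, LipschitzWith K φ.invFun)
    (hlim : Tendsto (fun t => φ t / t) (cobounded ℝ) (𝓝 L)) : L ≠ 0 := by
  obtain ⟨K, hK⟩ := hinv
  exact ne_zero_of_antilipschitzWith_of_tendsto_div
    (hK.to_rightInverse (Function.leftInverse_invFun hφ)) hlim

end Lipschitz

/-- The perspective of `φ`: the homogeneous function `(u, y) ↦ u φ(y / u)`. On the line `u = 0` it
is `L y`, where `L` stands for the limit of `φ t / t` at infinity. -/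
noncomputable def perspective (φ : ℝ → ℝ) (L u y : ℝ) : ℝ :=
  if u = 0 then L * y else u * φ (y / u)

section Perspective

variable {φ : ℝ → ℝ} {C L : ℝ} {K : ℝ≥0}

@[simp]
theorem perspective_zero (φ : ℝ → ℝ) (L y : ℝ) : perspective φ L 0 y = L * y := if_pos rfl

theorem perspective_of_ne_zero (φ : ℝ → ℝ) (L : ℝ) {u : ℝ} (hu : u ≠ 0) (y : ℝ) :
    perspective φ L u y = u * φ (y / u) := if_neg hu

theorem lipschitzWith_perspective_right (hφ : LipschitzWith K φ) (L u : ℝ) :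
    LipschitzWith (max K ‖L‖₊) (perspective φ L u) := by
  refine LipschitzWith.of_dist_le_mul fun y z => ?_
  simp only [Real.dist_eq, NNReal.coe_max, coe_nnnorm, Real.norm_eq_abs]
  obtain rfl | hu := eq_or_ne u 0
  · rw [perspective_zero, perspective_zero, ← mul_sub, abs_mul]
    grw [← le_max_right]
  · have hdist : |φ (y / u) - φ (z / u)| ≤ K * |y / u - z / u| := hφ.dist_le_mul _ _
    rw [perspective_of_ne_zero φ L hu, perspective_of_ne_zero φ L hu, ← mul_sub, abs_mul]
    calc |u| * |φ (y / u) - φ (z / u)| ≤ |u| * (K * |y / u - z / u|) := by gcongr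
      _ = K * |y - z| := by
        rw [← sub_div, abs_div]
        field_simp
      _ ≤ max (K : ℝ) |L| * |y - z| := by grw [← le_max_left]

theorem SecantInterceptBoundOn.abs_perspective_sub_le (h : SecantInterceptBoundOn φ C univ)
    (hL : ∀ t, |φ t - L * t| ≤ C) (u v y : ℝ) :
    |perspective φ L u y - perspective φ L v y| ≤ C * |u - v| := by
  have zero_right : ∀ u ≠ 0, |perspective φ L u y - perspective φ L 0 y| ≤ C * |u| := by
    intro u hu
    have hfactor : u * φ (y / u) - L * y = u * (φ (y / u) - L * (y / u)) := by field_simp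
    rw [perspective_zero, perspective_of_ne_zero φ L hu, hfactor, abs_mul, mul_comm]
    grw [hL]
  obtain rfl | hu := eq_or_ne u 0 <;> obtain rfl | hv := eq_or_ne v 0
  · simp
  · simpa [abs_sub_comm] using zero_right v hv
  · simpa using zero_right u hu
  rw [perspective_of_ne_zero φ L hu, perspective_of_ne_zero φ L hv]
  obtain rfl | hy := eq_or_ne y 0
  · have hφ0 : |φ 0| ≤ C := by simpa using hL 0
    simp only [zero_div]
    rw [← sub_mul, abs_mul, mul_comm]
    grw [hφ0]
  · have hsecant := h (y / u) trivial (y / v) trivial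
    have hvalue : y / v * φ (y / u) - y / u * φ (y / v)
        = (u * φ (y / u) - v * φ (y / v)) * (y / (u * v)) := by field_simp
    have hstep : y / v - y / u = (u - v) * (y / (u * v)) := by field_simp
    have hscale : 0 < |y / (u * v)| := by positivity
    rw [hvalue, hstep, abs_mul, abs_mul, ← mul_assoc] at hsecant
    exact le_of_mul_le_mul_right hsecant hscale

theorem exists_lipschitzWith_perspective (hφ : LipschitzWith K φ)
    (hlim : Tendsto (fun t => φ t / t) (cobounded ℝ) (𝓝 L))
    (h : SecantInterceptBoundOn φ C univ) :
    ∃ K', LipschitzWith K' (Function.uncurry (perspective φ L)) := by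
  have hL : ∀ t, |φ t - L * t| ≤ C := fun t =>
    h.abs_sub_mul_le le_rfl univ_mem hlim (mem_univ t)
  exact ⟨_, .uncurry (fun y => .of_dist_le' fun u v => h.abs_perspective_sub_le hL u v y)
    (lipschitzWith_perspective_right hφ L)⟩

theorem exists_lipschitzWith_perspective_of_eval_comp_eq (hφ : LipschitzWith K φ) {p q : ℝ[X]}
    (hq : 0 < q.natDegree) (hpq : ∀ t, q.eval (φ t) = p.eval t) (hL : L ≠ 0)
    (hlim : Tendsto (fun t => φ t / t) (cobounded ℝ) (𝓝 L)) :
    ∃ K', LipschitzWith K' (Function.uncurry (perspective φ L)) := by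
  have hΘ : φ =Θ[cobounded ℝ] id := (isTheta_of_div_tendsto_nhds_ne_zero hlim hL).symm
  obtain ⟨C, hC⟩ := exists_secantInterceptBoundOn_univ hφ hlim
    (eventually_differentiableAt_of_eval_comp_eq hφ.continuous hΘ hq hpq)
    (sub_mul_deriv_isBigO_one_of_eval_comp_eq hφ.continuous hΘ hq hpq)
  exact exists_lipschitzWith_perspective hφ hlim hC

end Perspective

theorem exists_lipschitzOnWith_abs_rpow {β : ℝ} (hβ : 1 ≤ β) (R : ℝ) :
    ∃ K, LipschitzOnWith K (fun x : ℝ => |x| ^ β) {x | |x| ≤ R} := by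
  have hsmooth : ContDiff ℝ 1 fun x : ℝ => x ^ β :=
    Real.contDiff_rpow_const_of_le (n := 1) (by simpa using hβ)
  obtain ⟨K, hK⟩ := hsmooth.contDiffOn.exists_lipschitzOnWith one_ne_zero (convex_Icc 0 R)
    isCompact_Icc
  exact ⟨K * 1, hK.comp (lipschitzWith_one_norm (E := ℝ)).lipschitzOnWith
    fun x hx => ⟨abs_nonneg x, hx⟩⟩

/-- The formula defining the inverse `β`-transform on one side of the `y`-axis, with arbitrary
coefficients `l` and `a` in place of `λ` and `|λ| ^ β`. -/
noncomputable def inverseBetaBranch (β l a : ℝ) (φ : ℝ → ℝ) (L : ℝ) (z : ℝ × ℝ) : ℝ × ℝ :=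
  (l * z.1, a * perspective φ L (|z.1| ^ β) z.2)

theorem inverseBetaBranch_zero {β : ℝ} (hβ : β ≠ 0) (l a : ℝ) (φ : ℝ → ℝ) (L y : ℝ) :
    inverseBetaBranch β l a φ L (0, y) = (0, a * L * y) := by
  simp [inverseBetaBranch, Real.zero_rpow hβ, mul_assoc]

theorem inverseBetaBranch_of_ne_zero (β l a : ℝ) (φ : ℝ → ℝ) (L : ℝ) {x : ℝ} (hx : x ≠ 0) (y : ℝ) :
    inverseBetaBranch β l a φ L (x, y) = (l * x, a * |x| ^ β * φ (y / |x| ^ β)) := by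
  have hpow : |x| ^ β ≠ 0 := (Real.rpow_pos_of_pos (abs_pos.2 hx) β).ne'
  rw [inverseBetaBranch, perspective_of_ne_zero φ L hpow, mul_assoc]

theorem exists_lipschitzOnWith_inverseBetaBranch {β : ℝ} (hβ : 1 ≤ β) (l a : ℝ) {φ : ℝ → ℝ} {L : ℝ}
    {K : ℝ≥0} (hP : LipschitzWith K (Function.uncurry (perspective φ L))) (R : ℝ) :
    ∃ K', LipschitzOnWith K' (inverseBetaBranch β l a φ L) {z | |z.1| ≤ R} := by
  obtain ⟨Kβ, hKβ⟩ := exists_lipschitzOnWith_abs_rpow hβ R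
  have hfst : LipschitzOnWith 1 (Prod.fst : ℝ × ℝ → ℝ) {z | |z.1| ≤ R} :=
    LipschitzWith.prod_fst.lipschitzOnWith
  have hpow := hKβ.comp hfst fun z hz => hz
  have hpair := hpow.prodMk LipschitzWith.prod_snd.lipschitzOnWith
  exact ⟨_, ((lipschitzWith_smul l).comp_lipschitzOnWith hfst).prodMk
    ((lipschitzWith_smul a).comp_lipschitzOnWith (hP.comp_lipschitzOnWith hpair))⟩

theorem lipschitzOnWith_of_closed_cover {E F : Type*} [SeminormedAddCommGroup E] [NormedSpace ℝ E]
    [PseudoMetricSpace F] {f : E → F} {K : ℝ≥0} {s A B : Set E} (hs : Convex ℝ s)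
    (hA : IsClosed A) (hB : IsClosed B) (hAB : s ⊆ A ∪ B) (hfA : LipschitzOnWith K f (s ∩ A))
    (hfB : LipschitzOnWith K f (s ∩ B)) : LipschitzOnWith K f s := by
  have crossing : ∀ x ∈ s ∩ A, ∀ y ∈ s ∩ B, dist (f x) (f y) ≤ K * dist x y := by
    rintro x ⟨hx, hxA⟩ y ⟨hy, hyB⟩
    have hseg : segment ℝ x y ⊆ s := hs.segment_subset hx hy
    obtain ⟨m, hm, hmA, hmB⟩ := isPreconnected_closed_iff.1
      (convex_segment (𝕜 := ℝ) x y).isPreconnected A B hA hB (hseg.trans hAB)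
      ⟨x, left_mem_segment ℝ x y, hxA⟩ ⟨y, right_mem_segment ℝ x y, hyB⟩
    calc dist (f x) (f y) ≤ dist (f x) (f m) + dist (f m) (f y) := dist_triangle _ _ _
      _ ≤ K * dist x m + K * dist m y := by
        gcongr
        exacts [hfA.dist_le_mul x ⟨hx, hxA⟩ m ⟨hseg hm, hmA⟩,
          hfB.dist_le_mul m ⟨hseg hm, hmB⟩ y ⟨hy, hyB⟩]
      _ = K * dist x y := by rw [← mul_add, dist_add_dist_of_mem_segment hm]
  refine LipschitzOnWith.of_dist_le_mul fun x hx y hy => ?_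
  rcases hAB hx with hxA | hxB <;> rcases hAB hy with hyA | hyB
  · exact hfA.dist_le_mul x ⟨hx, hxA⟩ y ⟨hy, hyA⟩
  · exact crossing x ⟨hx, hxA⟩ y ⟨hy, hyB⟩
  · rw [dist_comm, dist_comm x]
    exact crossing y ⟨hy, hyA⟩ x ⟨hx, hxB⟩
  · exact hfB.dist_le_mul x ⟨hx, hxB⟩ y ⟨hy, hyB⟩

theorem convex_setOf_abs_fst_le (R : ℝ) : Convex ℝ {z : ℝ × ℝ | |z.1| ≤ R} := by
  simpa [← abs_le, preimage] using (convex_Icc (-R) R).linear_preimage (LinearMap.fst ℝ ℝ ℝ)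

theorem stmt_10_general {β : ℝ} (hβ : 1 ≤ β) (l1 l2 a1 a2 : ℝ) {φ1 φ2 : ℝ → ℝ}
    (hφ1 : ∃ K : ℝ≥0, LipschitzWith K φ1) (hφ2 : ∃ K : ℝ≥0, LipschitzWith K φ2)
    {p1 q1 p2 q2 : ℝ[X]} (hq1 : 1 ≤ q1.natDegree) (hq2 : 1 ≤ q2.natDegree)
    (hpq1 : ∀ t, q1.eval (φ1 t) = p1.eval t) (hpq2 : ∀ t, q2.eval (φ2 t) = p2.eval t)
    {L1 L2 : ℝ} (hL1 : L1 ≠ 0) (hL2 : L2 ≠ 0)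
    (hlim1 : Tendsto (fun t => φ1 t / t) (cobounded ℝ) (𝓝 L1))
    (hlim2 : Tendsto (fun t => φ2 t / t) (cobounded ℝ) (𝓝 L2))
    (hLL : a1 * L1 = a2 * L2) {Φ : ℝ × ℝ → ℝ × ℝ}
    (hΦpos : ∀ x y : ℝ, 0 < x → Φ (x, y) = (l1 * x, a1 * x ^ β * φ1 (y / x ^ β)))
    (hΦneg : ∀ x y : ℝ, x < 0 → Φ (x, y) = (l2 * x, a2 * |x| ^ β * φ2 (y / |x| ^ β)))
    (hΦ0 : ∀ y : ℝ, Φ (0, y) = (0, a1 * L1 * y)) (R : ℝ) :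
    ∃ K : ℝ≥0, LipschitzOnWith K Φ {z : ℝ × ℝ | |z.1| ≤ R} := by
  obtain ⟨_, hφ1⟩ := hφ1
  obtain ⟨_, hφ2⟩ := hφ2
  have hβ0 : β ≠ 0 := by positivity
  have hright : EqOn Φ (inverseBetaBranch β l1 a1 φ1 L1) {z | 0 ≤ z.1} := by
    rintro ⟨x, y⟩ (hx : 0 ≤ x)
    obtain rfl | hx := hx.eq_or_lt
    · rw [hΦ0, inverseBetaBranch_zero hβ0]
    · rw [hΦpos x y hx, inverseBetaBranch_of_ne_zero β l1 a1 φ1 L1 hx.ne', abs_of_pos hx]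
  have hleft : EqOn Φ (inverseBetaBranch β l2 a2 φ2 L2) {z | z.1 ≤ 0} := by
    rintro ⟨x, y⟩ (hx : x ≤ 0)
    obtain rfl | hx := hx.eq_or_lt
    · rw [hΦ0, inverseBetaBranch_zero hβ0, hLL]
    · rw [hΦneg x y hx, inverseBetaBranch_of_ne_zero β l2 a2 φ2 L2 hx.ne]
  obtain ⟨_, hP1⟩ := exists_lipschitzWith_perspective_of_eval_comp_eq hφ1 hq1 hpq1 hL1 hlim1
  obtain ⟨_, hP2⟩ := exists_lipschitzWith_perspective_of_eval_comp_eq hφ2 hq2 hpq2 hL2 hlim2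
  obtain ⟨K1, hK1⟩ := exists_lipschitzOnWith_inverseBetaBranch hβ l1 a1 hP1 R
  obtain ⟨K2, hK2⟩ := exists_lipschitzOnWith_inverseBetaBranch hβ l2 a2 hP2 R
  refine ⟨max K1 K2, lipschitzOnWith_of_closed_cover (convex_setOf_abs_fst_le R)
    (isClosed_le continuous_const continuous_fst) (isClosed_le continuous_fst continuous_const)
    (fun z _ => le_total 0 z.1) ?_ ?_⟩
  · intro z hz w hw
    rw [hright hz.2, hright hw.2]
    exact hK1.weaken (le_max_left K1 K2) hz.1 hw.1
  · intro z hz w hw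
    rw [hleft hz.2, hleft hw.2]
    exact hK2.weaken (le_max_right K1 K2) hz.1 hw.1

/-- The inverse β-transform of a β-transition is Lipschitz on some strip `{|x| < δ}`. -/
theorem stmt_10 (β : ℚ) (hβ : 1 < β)
    (l1 l2 : ℝ) (hl1 : l1 ≠ 0) (hl2 : l2 ≠ 0) (hll : 0 < l1 * l2)
    (φ1 φ2 : ℝ → ℝ)
    (hφ1bij : Function.Bijective φ1) (hφ1lip : ∃ K : NNReal, LipschitzWith K φ1)
    (hφ1inv : ∃ K : NNReal, LipschitzWith K (Function.invFun φ1))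
    (hφ2bij : Function.Bijective φ2) (hφ2lip : ∃ K : NNReal, LipschitzWith K φ2)
    (hφ2inv : ∃ K : NNReal, LipschitzWith K (Function.invFun φ2))
    (p1 q1 p2 q2 : Polynomial ℝ)
    (hp1 : 1 ≤ p1.natDegree) (hq1 : 1 ≤ q1.natDegree)
    (hp2 : 1 ≤ p2.natDegree) (hq2 : 1 ≤ q2.natDegree)
    (hpq1 : ∀ t : ℝ, q1.eval (φ1 t) = p1.eval t)
    (hpq2 : ∀ t : ℝ, q2.eval (φ2 t) = p2.eval t)
    (L1 L2 : ℝ)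
    (hL1top : Tendsto (fun t => φ1 t / t) atTop (𝓝 L1))
    (hL1bot : Tendsto (fun t => φ1 t / t) atBot (𝓝 L1))
    (hL2top : Tendsto (fun t => φ2 t / t) atTop (𝓝 L2))
    (hL2bot : Tendsto (fun t => φ2 t / t) atBot (𝓝 L2))
    (hLL : |l1| ^ (β : ℝ) * L1 = |l2| ^ (β : ℝ) * L2)
    (Φ : ℝ × ℝ → ℝ × ℝ)
    (hΦpos : ∀ x y : ℝ, 0 < x →
      Φ (x, y) = (l1 * x, |l1| ^ (β : ℝ) * x ^ (β : ℝ) * φ1 (y / x ^ (β : ℝ))))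
    (hΦneg : ∀ x y : ℝ, x < 0 →
      Φ (x, y) = (l2 * x, |l2| ^ (β : ℝ) * |x| ^ (β : ℝ) * φ2 (y / |x| ^ (β : ℝ))))
    (hΦ0 : ∀ y : ℝ, Φ (0, y) = (0, |l1| ^ (β : ℝ) * L1 * y)) :
    ∃ δ : ℝ, 0 < δ ∧ ∃ K : NNReal, LipschitzOnWith K Φ {z : ℝ × ℝ | |z.1| < δ} := by
  have cobounded_eq : cobounded ℝ = atBot ⊔ atTop := IsOrderBornology.cobounded_eq
  have hlim1 := cobounded_eq ▸ hL1bot.sup hL1top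
  have hlim2 := cobounded_eq ▸ hL2bot.sup hL2top
  have hL1 := ne_zero_of_lipschitzWith_invFun_of_tendsto_div hφ1bij.injective hφ1inv hlim1
  have hL2 := ne_zero_of_lipschitzWith_invFun_of_tendsto_div hφ2bij.injective hφ2inv hlim2
  obtain ⟨K, hK⟩ := stmt_10_general (mod_cast hβ.le) l1 l2 _ _ hφ1lip hφ2lip hq1 hq2 hpq1 hpq2
    hL1 hL2 hlim1 hlim2 hLL hΦpos hΦneg hΦ0 1
  exact ⟨1, one_pos, K, hK.mono fun z (hz : |z.1| < 1) => hz.le⟩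
end
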